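/- arXiv:2603.28485 — 3 statements merged into one kernel-verified Lean document; each statement's English description precedes it below -/
import Mathlib

section
/- Let n, k be positive integers, for each z ∈ F_{2^k} let f^{(z)} : F_{2^n} → F_2 be a function, and let 𝒱 ⊆ F_{2^n} be an F_2-subspace such that D_{u₁} D_{u₂} f^{(z)}(x) = 0 for all u₁, u₂ ∈ 𝒱, all x ∈ F_{2^n}, and all z ∈ F_{2^k}. Define f : F_{2^n} × F_{2^k} × F_{2^k} → F_2 by f(x,y,z) = f^{(z)}(x) + Tr_1^k(yz). Then 𝒱 × F_{2^k} × {0} is an M-subspace of f; in particular f admits an M-subspace of F_2-dimension dim 𝒱 + k. -/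
/-- The second-order derivative `D_a D_b f (x) = f x + f (x+a) + f (x+b) + f (x+a+b)`. -/
def D2 {V : Type*} [AddCommGroup V] (f : V → ZMod 2) (a b x : V) : ZMod 2 :=
  f x + f (x + a) + f (x + b) + f (x + a + b)

/-- An `M`-subspace of `f` : a subspace on which all second-order derivatives of `f` vanish. -/
def IsMSubspace {V : Type*} [AddCommGroup V] [Module (ZMod 2) V] (f : V → ZMod 2)
    (U : Submodule (ZMod 2) V) : Prop :=
  ∀ a ∈ U, ∀ b ∈ U, ∀ x, D2 f a b x = 0

/-- The absolute trace map of `F_{2^n}`. -/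
noncomputable def Tr (n : ℕ) (x : GaloisField 2 n) : ZMod 2 :=
  Algebra.trace (ZMod 2) (GaloisField 2 n) x

/-!
In characteristic two the second derivative of an additive map vanishes. On a coset of `𝒱 × Y × 0`
the coordinate `z` is constant, so there `f` agrees with the sum of the pullback of `f⁽ᶻ⁾` along
`(x, y, z) ↦ x` and a function additive in `y`; second derivatives along `𝒱 × Y × 0` only see `f`
on such cosets.
-/

section SecondDerivative

variable {V : Type*} [AddCommGroup V]

lemma D2_add (f g : V → ZMod 2) (a b x : V) : D2 (f + g) a b x = D2 f a b x + D2 g a b x := by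
  simp only [D2, Pi.add_apply]
  ring

lemma D2_addMonoidHom (φ : V →+ ZMod 2) (a b x : V) : D2 φ a b x = 0 := by
  calc D2 φ a b x = 2 * (2 * φ x + φ a + φ b) := by
        simp only [D2, map_add]
        ring
    _ = 0 := by rw [show (2 : ZMod 2) = 0 from rfl, zero_mul]

lemma D2_comp_addMonoidHom {W : Type*} [AddCommGroup W] (f : W → ZMod 2) (L : V →+ W)
    (a b x : V) : D2 (f ∘ L) a b x = D2 f (L a) (L b) (L x) := by
  simp only [D2, Function.comp_apply, map_add]

end SecondDerivative

namespace IsMSubspace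

variable {V : Type*} [AddCommGroup V] [Module (ZMod 2) V] {f g : V → ZMod 2}
  {U : Submodule (ZMod 2) V}

lemma add (hf : IsMSubspace f U) (hg : IsMSubspace g U) : IsMSubspace (f + g) U := by
  intro a ha b hb x
  rw [D2_add, hf a ha b hb x, hg a ha b hb x, add_zero]

lemma of_addMonoidHom (φ : V →+ ZMod 2) (U : Submodule (ZMod 2) V) : IsMSubspace φ U :=
  fun a _ b _ x ↦ D2_addMonoidHom φ a b x

lemma comp_linearMap {W : Type*} [AddCommGroup W] [Module (ZMod 2) W] {f : W → ZMod 2}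
    {S : Submodule (ZMod 2) W} (hf : IsMSubspace f S) (L : V →ₗ[ZMod 2] W) (hU : U ≤ S.comap L) :
    IsMSubspace (f ∘ L) U := by
  intro a ha b hb x
  exact (D2_comp_addMonoidHom f L.toAddMonoidHom a b x).trans (hf _ (hU ha) _ (hU hb) _)

lemma of_forall_exists_eq_on_coset
    (h : ∀ x, ∃ g, IsMSubspace g U ∧ ∀ u ∈ U, f (x + u) = g (x + u)) : IsMSubspace f U := by
  intro a ha b hb x
  obtain ⟨g, hg, hfg⟩ := h x
  have hfg_x : f x = g x := by simpa only [add_zero] using hfg 0 U.zero_mem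
  have hfg_ab : f (x + a + b) = g (x + a + b) := by
    simpa only [add_assoc] using hfg (a + b) (U.add_mem ha hb)
  calc D2 f a b x = D2 g a b x := by simp only [D2, hfg_x, hfg a ha, hfg b hb, hfg_ab]
    _ = 0 := hg a ha b hb x

lemma prod_top_prod_bot {X Y Z : Type*} [AddCommGroup X] [Module (ZMod 2) X] [AddCommGroup Y]
    [Module (ZMod 2) Y] [AddCommGroup Z] [Module (ZMod 2) Z] {fz : Z → X → ZMod 2}
    {𝒱 : Submodule (ZMod 2) X} (h𝒱 : ∀ z, IsMSubspace (fz z) 𝒱) (φ : Z → Y →+ ZMod 2)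
    {f : X × Y × Z → ZMod 2} (hf : ∀ x y z, f (x, y, z) = fz z x + φ z y) :
    IsMSubspace f (𝒱.prod ((⊤ : Submodule (ZMod 2) Y).prod (⊥ : Submodule (ZMod 2) Z))) := by
  refine of_forall_exists_eq_on_coset fun ⟨x, y, z⟩ ↦
    ⟨fz z ∘ LinearMap.fst (ZMod 2) X (Y × Z) +
      (φ z).comp ((AddMonoidHom.fst Y Z).comp (AddMonoidHom.snd X (Y × Z))), ?_, ?_⟩
  · have le_comap_fst : 𝒱.prod (Submodule.prod ⊤ ⊥) ≤ 𝒱.comap (LinearMap.fst (ZMod 2) X (Y × Z)) :=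
      fun _ hu ↦ (Submodule.mem_prod.mp hu).1
    exact ((h𝒱 z).comp_linearMap _ le_comap_fst).add (of_addMonoidHom _ _)
  · rintro ⟨u, v, w⟩ ⟨-, -, hw⟩
    obtain rfl : w = 0 := hw
    simp [hf]

end IsMSubspace

lemma finrank_submodule_prod_top_prod_bot {R M N P : Type*} [Semiring R] [StrongRankCondition R]
    [AddCommMonoid M] [Module R M] [AddCommMonoid N] [Module R N] [AddCommMonoid P] [Module R P]
    [Module.Free R N] [Module.Finite R N] (S : Submodule R M) [Module.Free R S]
    [Module.Finite R S] :
    Module.finrank R (S.prod ((⊤ : Submodule R N).prod (⊥ : Submodule R P))) =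
      Module.finrank R S + Module.finrank R N := by
  let ι : S × N →ₗ[R] M × N × P := S.subtype.prodMap (LinearMap.inl R N P)
  have range_ι : LinearMap.range ι = S.prod ((⊤ : Submodule R N).prod (⊥ : Submodule R P)) := by
    rw [LinearMap.range_prodMap, S.range_subtype, LinearMap.range_eq_map, Submodule.map_inl]
  have ι_injective : Function.Injective ι :=
    S.subtype_injective.prodMap LinearMap.inl_injective
  rw [← range_ι, LinearMap.finrank_range_of_inj ι_injective, Module.finrank_prod]

theorem GMM_common_M_subspace_general {X Y Z : Type*} [AddCommGroup X] [Module (ZMod 2) X]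
    [AddCommGroup Y] [Module (ZMod 2) Y] [Module.Finite (ZMod 2) Y]
    [AddCommGroup Z] [Module (ZMod 2) Z] (fz : Z → X → ZMod 2)
    (𝒱 : Submodule (ZMod 2) X) [Module.Finite (ZMod 2) 𝒱]
    (h𝒱 : ∀ z, IsMSubspace (fz z) 𝒱) (φ : Z → Y →+ ZMod 2)
    (f : X × Y × Z → ZMod 2) (hf : ∀ x y z, f (x, y, z) = fz z x + φ z y) :
    IsMSubspace f (𝒱.prod ((⊤ : Submodule (ZMod 2) Y).prod (⊥ : Submodule (ZMod 2) Z))) ∧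
    Module.finrank (ZMod 2)
        (𝒱.prod ((⊤ : Submodule (ZMod 2) Y).prod (⊥ : Submodule (ZMod 2) Z))) =
      Module.finrank (ZMod 2) 𝒱 + Module.finrank (ZMod 2) Y :=
  ⟨.prod_top_prod_bot h𝒱 φ hf, finrank_submodule_prod_top_prod_bot 𝒱⟩

/-- If the bent functions `f⁽ᶻ⁾` share a common `M`-subspace `𝒱`, then the generalized
Maiorana–McFarland function `f(x,y,z) = f⁽ᶻ⁾(x) + Tr(yz)` has the `M`-subspace
`𝒱 × F_{2^k} × {0}`, of dimension `dim 𝒱 + k`. -/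
theorem GMM_common_M_subspace (n k : ℕ) (hn : 0 < n) (hk : 0 < k)
    (fz : GaloisField 2 k → GaloisField 2 n → ZMod 2)
    (𝒱 : Submodule (ZMod 2) (GaloisField 2 n))
    (h𝒱 : ∀ z : GaloisField 2 k, ∀ u₁ ∈ 𝒱, ∀ u₂ ∈ 𝒱, ∀ x, D2 (fz z) u₁ u₂ x = 0)
    (f : GaloisField 2 n × GaloisField 2 k × GaloisField 2 k → ZMod 2)
    (hf : ∀ x y z, f (x, y, z) = fz z x + Tr k (y * z)) :
    IsMSubspace f (𝒱.prod ((⊤ : Submodule (ZMod 2) (GaloisField 2 k)).prod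
        (⊥ : Submodule (ZMod 2) (GaloisField 2 k)))) ∧
    Module.finrank (ZMod 2)
        (𝒱.prod ((⊤ : Submodule (ZMod 2) (GaloisField 2 k)).prod
          (⊥ : Submodule (ZMod 2) (GaloisField 2 k)))) =
      Module.finrank (ZMod 2) 𝒱 + k := by
  simpa only [GaloisField.finrank 2 hk.ne'] using GMM_common_M_subspace_general fz 𝒱 h𝒱
    (fun z ↦ (Algebra.trace (ZMod 2) _).toAddMonoidHom.comp (AddMonoidHom.mulRight z)) f hf
end

section
/- Let m ≥ 1 and r ≥ 1 be integers, and let P ∈ F_{2^m}[X] be a polynomial of odd degree t. For i = 1, …, r let α_i, β_i, κ_i, υ_i ∈ F_{2^m} with κ_i ≠ 0 and α_i υ_i + β_i κ_i ≠ 0, and suppose there exists an index j such that υ_j/κ_j ≠ υ_i/κ_i for all i ≠ j. Let θ ∈ F_{2^m}, and let N be the number of pairs (x,z) ∈ F_{2^m} × F_{2^m} such that x ≠ υ_i/κ_i for all i and z² + z = Σ_{i=1}^{r} P((α_i x + β_i)/(κ_i x + υ_i)) + θ. Then, as real numbers, N ≥ 2^m − 1 − (rt + 1)·rt·2^{m/2}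 − r(rt + 2). Moreover, if m ≥ 4 and rt ≤ 2^{m/4} − 1, then N > 0. -/
/-!
Bombieri's form of Stepanov's method. In the coordinate `y = (α_j x + β_j) / (κ_j x + υ_j)` the
right-hand side is `A(y) / B(y)` with `deg A > deg B` and `deg A + deg B = 2g + 1`; putting
`w = B z` turns the curve into `w² = B w + A B`, which has a single place at infinity. If
`q = 2 ^ a * 2 ^ b`, take a basis `f` of functions of small pole order there. A dimension count
yields functions `v`, not all zero, with `∑ v i ^ 2 ^ a * f i = 0`, and then `∑ v i * f i ^ 2 ^ b`
is nonzero because its terms have distinct pole orders, yet vanishes at every rational point since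
its `2 ^ a`-th power agrees there with `∑ v i ^ 2 ^ a * f i`. Comparing its pole order with its
zeros bounds the number of `x` below rational points from above. Since `z² + z` has image of index
two, every other `x` lies below a point of the twisted curve, with `θ + δ` in place of `θ`, and the
upper bound for the twist is the desired lower bound.
-/

open Polynomial

/-- The coordinate ring `K[X, w] / (w² - B w - G)` of the affine plane curve `w² = B w + G`; an
element `⟨a, b⟩` stands for `a + b w`. With `deg G = 2g + 1` and `deg B ≤ g` the curve has a single
place at infinity, at which `X` has a pole of order `2` and `w` one of order `2g + 1`. -/
abbrev HyperellipticRing {K : Type*} [Field K] (G B : K[X]) : Type _ :=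
  QuadraticAlgebra K[X] G B

namespace HyperellipticRing

section PoleOrder

variable {K : Type*} [Field K] {G B : K[X]} {g : ℕ}

/-- The order of the pole at infinity, computed as the degree of the norm down to `K[X]`;
it is `⊥` at `0`. -/
noncomputable def poleOrder (v : HyperellipticRing G B) : WithBot ℕ :=
  v.norm.degree

lemma poleOrder_mul (u v : HyperellipticRing G B) :
    poleOrder (u * v) = poleOrder u + poleOrder v := by
  simp only [poleOrder, map_mul, degree_mul]

lemma poleOrder_pow (u : HyperellipticRing G B) (n : ℕ) :
    poleOrder (u ^ n) = n • poleOrder u := by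
  simp only [poleOrder, map_pow, degree_pow]

lemma poleOrder_neg (u : HyperellipticRing G B) : poleOrder (-u) = poleOrder u := by
  simp only [poleOrder, QuadraticAlgebra.norm_neg]

lemma poleOrder_pow_mul_le {u v : HyperellipticRing G B} {m n : ℕ} (k : ℕ)
    (hu : poleOrder u ≤ m) (hv : poleOrder v ≤ n) :
    poleOrder (u ^ k * v) ≤ (k * m + n : ℕ) := by
  rw [poleOrder, map_mul, map_pow]
  exact_mod_cast degree_mul_le_of_le (degree_pow_le_of_le k hu) hv

/-- The Riemann–Roch space `L(n∞)`, given in coordinates: `2 deg a ≤ n` and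
`2 deg b + 2g + 1 ≤ n` for `a + b w`. The truncated subtraction makes `b = 0` for `n ≤ 2g`. -/
noncomputable def riemannRochSpace (G B : K[X]) (g n : ℕ) :
    Submodule K (HyperellipticRing G B) where
  carrier := {v | v.re ∈ degreeLT K (n / 2 + 1) ∧ v.im ∈ degreeLT K ((n + 1 - 2 * g) / 2)}
  add_mem' hu hv := ⟨add_mem hu.1 hv.1, add_mem hu.2 hv.2⟩
  zero_mem' := ⟨zero_mem _, zero_mem _⟩
  smul_mem' c _ hv := ⟨Submodule.smul_mem _ c hv.1, Submodule.smul_mem _ c hv.2⟩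

/- The two squares have degrees of different parity, and the mixed term of the norm lies strictly
below the larger of the two. -/
lemma poleOrder_eq_max (hG : G.natDegree = 2 * g + 1) (hB : B.natDegree ≤ g)
    (v : HyperellipticRing G B) :
    poleOrder v = max (v.re ^ 2).degree (G * v.im ^ 2).degree := by
  obtain ⟨a, b⟩ := v
  have hG0 : G ≠ 0 := ne_zero_of_natDegree_gt (n := 0) (by omega)
  rw [poleOrder, QuadraticAlgebra.norm_def]
  simp only [mul_assoc, ← sq]
  rcases eq_or_ne b 0 with rfl | hb
  · simp
  have ha2 : (a ^ 2).natDegree = 2 * a.natDegree := natDegree_pow a 2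
  have hGb2 : (G * b ^ 2).natDegree = 2 * g + 1 + 2 * b.natDegree := by
    rw [natDegree_mul hG0 (pow_ne_zero 2 hb), natDegree_pow, hG]
  have hmixed : (B * (a * b)).natDegree ≤ g + (a.natDegree + b.natDegree) :=
    natDegree_mul_le_of_le hB natDegree_mul_le
  rcases lt_or_ge (b.natDegree + g) a.natDegree with h | h
  · have hmax : (G * b ^ 2).degree < (a ^ 2).degree := degree_lt_degree (by omega)
    have hmix : (B * (a * b)).degree < (a ^ 2).degree := degree_lt_degree (by omega)
    rw [max_eq_left hmax.le, add_sub_assoc, degree_add_eq_left_of_degree_lt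
      ((degree_sub_le _ _).trans_lt (max_lt hmix hmax))]
  · have hmax : (a ^ 2).degree < (G * b ^ 2).degree := degree_lt_degree (by omega)
    have hmix : (B * (a * b)).degree < (G * b ^ 2).degree := degree_lt_degree (by omega)
    rw [max_eq_right hmax.le, degree_sub_eq_right_of_degree_lt
      ((degree_add_le _ _).trans_lt (max_lt hmax hmix))]

lemma poleOrder_eq_bot_iff (hG : G.natDegree = 2 * g + 1) (hB : B.natDegree ≤ g)
    {v : HyperellipticRing G B} : poleOrder v = ⊥ ↔ v = 0 := by
  have hG0 : G ≠ 0 := ne_zero_of_natDegree_gt (n := 0) (by omega)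
  rw [poleOrder_eq_max hG hB, max_eq_bot, degree_eq_bot, degree_eq_bot, QuadraticAlgebra.ext_iff]
  simp [hG0]

lemma exists_poleOrder_eq_natCast (hG : G.natDegree = 2 * g + 1) (hB : B.natDegree ≤ g)
    {v : HyperellipticRing G B} (hv : v ≠ 0) :
    ∃ d : ℕ, poleOrder v = d :=
  (WithBot.ne_bot_iff_exists.1 (mt (poleOrder_eq_bot_iff hG hB).1 hv)).imp fun _ => Eq.symm

lemma mem_riemannRochSpace_iff (hG : G.natDegree = 2 * g + 1) (hB : B.natDegree ≤ g)
    {v : HyperellipticRing G B} {n : ℕ} :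
    v ∈ riemannRochSpace G B g n ↔ poleOrder v ≤ n := by
  have hG0 : G ≠ 0 := ne_zero_of_natDegree_gt (n := 0) (by omega)
  change v.re ∈ degreeLT K _ ∧ v.im ∈ degreeLT K _ ↔ _
  rw [poleOrder_eq_max hG hB, max_le_iff, mem_degreeLT, mem_degreeLT]
  refine and_congr ?_ ?_
  · rcases eq_or_ne v.re 0 with h | h
    · simp [h]
    · rw [← natDegree_lt_iff_degree_lt h, ← natDegree_le_iff_degree_le, natDegree_pow]
      omega
  · rcases eq_or_ne v.im 0 with h | h
    · simp [h]
    · rw [← natDegree_lt_iff_degree_lt h, ← natDegree_le_iff_degree_le,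
        natDegree_mul hG0 (pow_ne_zero 2 h), natDegree_pow, hG]
      omega

lemma poleOrder_add_le (hG : G.natDegree = 2 * g + 1) (hB : B.natDegree ≤ g)
    (u v : HyperellipticRing G B) :
    poleOrder (u + v) ≤ max (poleOrder u) (poleOrder v) := by
  rcases hmax : max (poleOrder u) (poleOrder v) with _ | n
  · have hbot : max (poleOrder u) (poleOrder v) = ⊥ := hmax
    rw [max_eq_bot, poleOrder_eq_bot_iff hG hB, poleOrder_eq_bot_iff hG hB] at hbot
    rw [hbot.1, hbot.2, add_zero, (poleOrder_eq_bot_iff hG hB).2 rfl]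
    exact bot_le
  · obtain ⟨hu, hv⟩ := max_le_iff.1 hmax.le
    exact (mem_riemannRochSpace_iff hG hB).1
      (add_mem ((mem_riemannRochSpace_iff hG hB).2 hu) ((mem_riemannRochSpace_iff hG hB).2 hv))

lemma poleOrder_sum_lt (hG : G.natDegree = 2 * g + 1) (hB : B.natDegree ≤ g)
    {ι : Type*} {T : Finset ι} {f : ι → HyperellipticRing G B} {n : ℕ}
    (hf : ∀ i ∈ T, poleOrder (f i) < n) : poleOrder (∑ i ∈ T, f i) < n :=
  Finset.sum_induction f (poleOrder · < n)
    (fun u v hu hv => (poleOrder_add_le hG hB u v).trans_lt (max_lt hu hv))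
    ((poleOrder_eq_bot_iff hG hB).2 rfl ▸ WithBot.bot_lt_coe n) hf

/- The nonzero terms have pole orders in the disjoint intervals `[m * e i, m * e i + m)`, so the
term with the largest `e i` cannot be cancelled. -/
lemma sum_mul_pow_ne_zero (hG : G.natDegree = 2 * g + 1) (hB : B.natDegree ≤ g)
    {ι : Type*} [Fintype ι] {f v : ι → HyperellipticRing G B} {e : ι → ℕ}
    {m : ℕ} (he : Function.Injective e) (hf : ∀ i, poleOrder (f i) = e i)
    (hv : ∀ i, poleOrder (v i) < m) (hv0 : v ≠ 0) : ∑ i, v i * f i ^ m ≠ 0 := by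
  classical
  intro hsum
  obtain ⟨k, hk⟩ := Function.ne_iff.1 hv0
  obtain ⟨i, hi, hmax⟩ := Finset.exists_max_image {i | v i ≠ 0} e ⟨k, by simpa using hk⟩
  simp only [Finset.mem_filter, Finset.mem_univ, true_and] at hi hmax
  have hterm (j : ι) : poleOrder (v j * f j ^ m) = poleOrder (v j) + (m * e j : ℕ) := by
    rw [poleOrder_mul, poleOrder_pow, hf, nsmul_eq_mul, Nat.cast_mul]
  have hrest : poleOrder (∑ j ∈ Finset.univ.erase i, v j * f j ^ m) < (m * e i : ℕ) := by
    refine poleOrder_sum_lt hG hB fun j hj => ?_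
    rcases eq_or_ne (v j) 0 with hj0 | hj0
    · rw [hj0, zero_mul, (poleOrder_eq_bot_iff hG hB).2 rfl]
      exact WithBot.bot_lt_coe _
    · have hlt : e j < e i := (hmax j hj0).lt_of_ne (he.ne (Finset.ne_of_mem_erase hj))
      obtain ⟨d, hd⟩ := exists_poleOrder_eq_natCast hG hB hj0
      have hdm : d < m := by exact_mod_cast hd ▸ hv j
      rw [hterm, hd]
      norm_cast
      nlinarith
  have htop : v i * f i ^ m = -∑ j ∈ Finset.univ.erase i, v j * f j ^ m := by
    rw [eq_neg_iff_add_eq_zero, Finset.add_sum_erase _ (fun j => v j * f j ^ m) (Finset.mem_univ i),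
      hsum]
  obtain ⟨d, hd⟩ := exists_poleOrder_eq_natCast hG hB hi
  rw [← poleOrder_neg, ← htop, hterm, hd] at hrest
  norm_cast at hrest
  omega

/-- The pole orders at infinity up to `n`, i.e. the elements of the Weierstrass semigroup
`⟨2, 2g + 1⟩` up to `n`. -/
def poleNumbers (g n : ℕ) : Finset ℕ :=
  {e ∈ Finset.range (n + 1) | Even e ∨ 2 * g < e}

lemma card_poleNumbers {n : ℕ} (hn : 2 * g ≤ n) : (poleNumbers g n).card = n + 1 - g := by
  have hgaps : (Finset.range (n + 1)).filter (fun e => ¬ (Even e ∨ 2 * g < e)) =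
      (Finset.range g).image (fun k => 2 * k + 1) := by
    ext e
    simp only [Finset.mem_filter, Finset.mem_range, Finset.mem_image, not_or, Nat.not_even_iff_odd]
    constructor
    · rintro ⟨-, ⟨k, rfl⟩, hk⟩
      exact ⟨k, by omega, rfl⟩
    · rintro ⟨k, hk, rfl⟩
      exact ⟨by omega, odd_two_mul_add_one k, by omega⟩
  have hsplit := Finset.card_filter_add_card_filter_not (s := Finset.range (n + 1))
    (fun e => Even e ∨ 2 * g < e)
  rw [hgaps, Finset.card_image_of_injective _ (fun a b h => by simpa using h), Finset.card_range,
    Finset.card_range] at hsplit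
  rw [poleNumbers]
  omega

/-- A monomial `X ^ i` or `X ^ i * w` with pole order `e`, for `e` even or `e > 2g`. -/
noncomputable def monomialOfPoleOrder (G B : K[X]) (g e : ℕ) : HyperellipticRing G B :=
  if Even e then ⟨X ^ (e / 2), 0⟩ else ⟨0, X ^ ((e - (2 * g + 1)) / 2)⟩

lemma poleOrder_monomialOfPoleOrder (hG : G.natDegree = 2 * g + 1) (hB : B.natDegree ≤ g)
    {e : ℕ} (he : Even e ∨ 2 * g < e) :
    poleOrder (monomialOfPoleOrder G B g e) = e := by
  rw [poleOrder_eq_max hG hB, monomialOfPoleOrder]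
  split_ifs with heven
  · obtain ⟨k, rfl⟩ := heven
    simp [← two_mul]
  · obtain ⟨k, rfl⟩ := Nat.not_even_iff_odd.1 heven
    have hgk : 2 * g < 2 * k + 1 := he.resolve_left heven
    have hk : 2 * k + 1 - (2 * g + 1) = 2 * (k - g) := by omega
    have hG0 : G ≠ 0 := ne_zero_of_natDegree_gt (n := 0) (by omega)
    simp only [ne_eq, OfNat.ofNat_ne_zero, not_false_eq_true, zero_pow, degree_zero, bot_le,
      sup_of_le_right, ← pow_mul, degree_mul, degree_X_pow, degree_eq_natDegree hG0, hG, hk]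
    norm_cast
    omega

end PoleOrder

section AuxiliaryFunction

variable {K : Type*} [Field K] {G B : K[X]} {g : ℕ}

lemma card_riemannRochSpace {n : ℕ} (hn : 2 * g ≤ n + 1) :
    Nat.card (riemannRochSpace G B g n) = Nat.card K ^ (n + 1 - g) := by
  let coords : riemannRochSpace G B g n ≃
      degreeLT K (n / 2 + 1) × degreeLT K ((n + 1 - 2 * g) / 2) :=
    { toFun v := (⟨v.1.re, v.2.1⟩, ⟨v.1.im, v.2.2⟩)
      invFun c := ⟨⟨c.1, c.2⟩, c.1.2, c.2.2⟩ }
  rw [Nat.card_congr coords, Nat.card_prod, Nat.card_congr (degreeLTEquiv K _).toEquiv,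
    Nat.card_congr (degreeLTEquiv K _).toEquiv]
  simp only [Nat.card_fun, Nat.card_fin, ← pow_add]
  congr 1
  omega

variable [Finite K] {p : ℕ} [Fact p.Prime] [CharP K p]

/- Counting dimensions: the additive map `v ↦ ∑ v i ^ p ^ a * f i` cannot be injective. -/
lemma exists_sum_pow_mul_eq_zero (hG : G.natDegree = 2 * g + 1) (hB : B.natDegree ≤ g)
    {ι : Type*} [Fintype ι] {f : ι → HyperellipticRing G B} {a k l : ℕ}
    (hf : ∀ i, poleOrder (f i) ≤ l) (hk : 2 * g ≤ k + 1)
    (hcard : p ^ a * k + l + 1 - g < (k + 1 - g) * Fintype.card ι) :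
    ∃ v : ι → HyperellipticRing G B,
      v ≠ 0 ∧ (∀ i, poleOrder (v i) ≤ k) ∧ ∑ i, v i ^ p ^ a * f i = 0 := by
  have : CharP (HyperellipticRing G B) p :=
    charP_of_injective_algebraMap (R := K[X]) QuadraticAlgebra.algebraMap_injective p
  have hmem (v : ι → riemannRochSpace G B g k) :
      ∑ i, (v i : HyperellipticRing G B) ^ p ^ a * f i ∈
        riemannRochSpace G B g (p ^ a * k + l) :=
    Submodule.sum_mem _ fun i _ => (mem_riemannRochSpace_iff hG hB).2 <|
      poleOrder_pow_mul_le _ ((mem_riemannRochSpace_iff hG hB).1 (v i).2) (hf i)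
  let Φ : (ι → riemannRochSpace G B g k) →+ riemannRochSpace G B g (p ^ a * k + l) :=
    { toFun v := ⟨_, hmem v⟩
      map_zero' := by ext1; simp [(Fact.out : p.Prime).ne_zero]
      map_add' u v := by
        ext1
        simp [add_pow_char_pow, add_mul, Finset.sum_add_distrib] }
  have hninj : ¬ Function.Injective Φ := fun hinj => by
    have hk' : k ≤ p ^ a * k := Nat.le_mul_of_pos_left k (pow_pos (Fact.out : p.Prime).pos a)
    have hcod := card_riemannRochSpace (G := G) (B := B) (n := p ^ a * k + l) (g := g) (by omega)
    have : Finite (riemannRochSpace G B g (p ^ a * k + l)) :=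
      Nat.finite_of_card_ne_zero (hcod ▸ (pow_pos Nat.card_pos _).ne')
    have hle := Nat.card_le_card_of_injective Φ hinj
    rw [Nat.card_fun, card_riemannRochSpace hk, hcod, ← pow_mul, Nat.card_eq_fintype_card (α := ι),
      Nat.pow_le_pow_iff_right Finite.one_lt_card] at hle
    omega
  rw [injective_iff_map_eq_zero] at hninj
  push Not at hninj
  obtain ⟨v, hv, hv0⟩ := hninj
  exact ⟨fun i => v i, fun h => hv0 (funext fun i => Subtype.ext (congrFun h i)),
    fun i => (mem_riemannRochSpace_iff hG hB).1 (v i).2, congrArg Subtype.val hv⟩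

/- Raise to the power `p ^ a` and use `φ (f i) ^ (p ^ a * p ^ b) = φ (f i)`. -/
lemma map_sum_mul_pow_eq_zero {R ι : Type*} [CommRing R] [Fintype ι] {f v : ι → R}
    {a b : ℕ} (hq : Nat.card K = p ^ a * p ^ b) (hv : ∑ i, v i ^ p ^ a * f i = 0) (φ : R →+* K) :
    φ (∑ i, v i * f i ^ p ^ b) = 0 := by
  have := Fintype.ofFinite K
  refine eq_zero_of_pow_eq_zero (n := p ^ a) ?_
  calc φ (∑ i, v i * f i ^ p ^ b) ^ p ^ a = ∑ i, φ (v i) ^ p ^ a * φ (f i) ^ Nat.card K := by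
        simp only [map_sum, map_mul, map_pow, sum_pow_char_pow, mul_pow, hq, ← pow_mul, mul_comm]
    _ = φ (∑ i, v i ^ p ^ a * f i) := by
        simp only [Nat.card_eq_fintype_card, FiniteField.pow_card, map_sum, map_mul, map_pow]
    _ = 0 := by rw [hv, map_zero]

lemma dimension_count {g s k : ℕ} (hs : s ≤ k + 1) (hg : (g + 1) ^ 2 < k + 1) :
    s * k + (s + 2 * g) + 1 - g < (k + 1 - g) * (s + g + 1) := by
  obtain ⟨d, hd⟩ : ∃ d, k + 1 = d + g := ⟨k + 1 - g, by rw [Nat.sub_add_cancel]; nlinarith⟩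
  have hleft : s * k + (s + 2 * g) + 1 - g = s * (d + g) + g + 1 := by
    rw [← hd, mul_add_one]
    omega
  rw [hleft, hd, Nat.add_sub_cancel]
  nlinarith

theorem exists_auxiliary_function (hG : G.natDegree = 2 * g + 1) (hB : B.natDegree ≤ g) {a b : ℕ}
    (hq : Nat.card K = p ^ a * p ^ b) (hab : a ≤ b) (hg : (g + 1) ^ 2 < p ^ b) :
    ∃ H : HyperellipticRing G B, H ≠ 0 ∧
      poleOrder H ≤ (Nat.card K + (2 * g + 1) * p ^ b - 1 : ℕ) ∧
      ∀ φ : HyperellipticRing G B →+* K, φ H = 0 := by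
  let E := poleNumbers g (p ^ a + 2 * g)
  let f (e : E) : HyperellipticRing G B := monomialOfPoleOrder G B g e
  have hf (e : E) : poleOrder (f e) = (e : ℕ) :=
    poleOrder_monomialOfPoleOrder hG hB (Finset.mem_filter.1 e.2).2
  have hfle (e : E) : poleOrder (f e) ≤ (p ^ a + 2 * g : ℕ) := by
    rw [hf]
    exact_mod_cast Finset.mem_range_succ_iff.1 (Finset.mem_filter.1 e.2).1
  have hcardE : Fintype.card E = p ^ a + g + 1 := by
    rw [Fintype.card_coe, card_poleNumbers (by omega)]
    omega
  obtain ⟨k, hk⟩ : ∃ k, p ^ b = k + 1 := Nat.exists_eq_succ_of_ne_zero (by omega)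
  have hpab : p ^ a ≤ k + 1 := hk ▸ Nat.pow_le_pow_right (Fact.out : p.Prime).pos hab
  obtain ⟨v, hv0, hv, hsum⟩ := exists_sum_pow_mul_eq_zero (a := a) (k := k) hG hB hfle
    (by nlinarith) (hcardE ▸ dimension_count hpab (hk ▸ hg))
  have hvlt (e : E) : poleOrder (v e) < (p ^ b : ℕ) :=
    (hv e).trans_lt (by exact_mod_cast (by omega : k < p ^ b))
  have hpole : p ^ b * (p ^ a + 2 * g) + k = Nat.card K + (2 * g + 1) * p ^ b - 1 := by
    have hring : p ^ b * (p ^ a + 2 * g) + p ^ b = Nat.card K + (2 * g + 1) * p ^ b := by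
      rw [hq]
      ring
    omega
  refine ⟨∑ e, v e * f e ^ p ^ b, sum_mul_pow_ne_zero hG hB Subtype.val_injective hf hvlt hv0,
    ?_, map_sum_mul_pow_eq_zero hq hsum⟩
  rw [← hpole, ← mem_riemannRochSpace_iff hG hB]
  refine Submodule.sum_mem _ fun e _ => (mem_riemannRochSpace_iff hG hB).2 ?_
  rw [mul_comm]
  exact poleOrder_pow_mul_le _ (hfle e) (hv e)

end AuxiliaryFunction

section Points

variable {K : Type*} [Field K] {G B : K[X]} {g : ℕ}

/-- Evaluation of the functions `a + b w` at the point `(y, w)` of the curve. -/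
noncomputable def evalAt (y w : K) (hw : w ^ 2 = B.eval y * w + G.eval y) :
    HyperellipticRing G B →+* K where
  toFun v := v.re.eval y + v.im.eval y * w
  map_one' := by simp [QuadraticAlgebra.re_one, QuadraticAlgebra.im_one]
  map_zero' := by simp
  map_add' u v := by simp only [QuadraticAlgebra.re_add, QuadraticAlgebra.im_add, eval_add]; ring
  map_mul' u v := by
    simp only [QuadraticAlgebra.re_mul, QuadraticAlgebra.im_mul, eval_add, eval_mul]
    linear_combination (-u.im.eval y * v.im.eval y) * hw

lemma evalAt_apply {y w : K} (hw : w ^ 2 = B.eval y * w + G.eval y) (v : HyperellipticRing G B) :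
    evalAt y w hw v = v.re.eval y + v.im.eval y * w :=
  rfl

lemma isRoot_re_im_of_evalAt_eq_zero {y w w' : K} (hww' : w ≠ w')
    (hw : w ^ 2 = B.eval y * w + G.eval y) (hw' : w' ^ 2 = B.eval y * w' + G.eval y)
    {v : HyperellipticRing G B} (hv : evalAt y w hw v = 0) (hv' : evalAt y w' hw' v = 0) :
    v.re.IsRoot y ∧ v.im.IsRoot y := by
  rw [evalAt_apply] at hv hv'
  have him : v.im.eval y = 0 :=
    (mul_eq_zero_iff_right (sub_ne_zero.2 hww')).1 (by linear_combination hv - hv')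
  exact ⟨by simpa [him] using hv, him⟩

lemma two_mul_card_le_of_isRoot (hG : G.natDegree = 2 * g + 1) (hB : B.natDegree ≤ g)
    {v : HyperellipticRing G B} (hv0 : v ≠ 0) {n : ℕ} (hn : poleOrder v ≤ n) {S : Finset K}
    (hS : ∀ y ∈ S, v.re.IsRoot y ∧ v.im.IsRoot y) : 2 * S.card ≤ n := by
  obtain ⟨hre, him⟩ := (mem_riemannRochSpace_iff hG hB).2 hn
  rw [mem_degreeLT] at hre him
  rcases eq_or_ne v.re 0 with h | h
  · have h' : v.im ≠ 0 := fun h' => hv0 (QuadraticAlgebra.ext h h')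
    rw [← natDegree_lt_iff_degree_lt h'] at him
    have hle := card_le_degree_of_subset_roots (p := v.im) (Z := S)
      fun y hy => (mem_roots h').2 (hS y hy).2
    omega
  · rw [← natDegree_lt_iff_degree_lt h] at hre
    have hle := card_le_degree_of_subset_roots (p := v.re) (Z := S)
      fun y hy => (mem_roots h).2 (hS y hy).1
    omega

theorem two_mul_card_lt_of_two_points [Finite K] {p : ℕ} [Fact p.Prime] [CharP K p]
    (hG : G.natDegree = 2 * g + 1) (hB : B.natDegree ≤ g) {a b : ℕ}
    (hq : Nat.card K = p ^ a * p ^ b) (hab : a ≤ b) (hg : (g + 1) ^ 2 < p ^ b) {S : Finset K}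
    (hS : ∀ y ∈ S, ∃ w w' : K, w ≠ w' ∧
      w ^ 2 = B.eval y * w + G.eval y ∧ w' ^ 2 = B.eval y * w' + G.eval y) :
    2 * S.card < Nat.card K + (2 * g + 1) * p ^ b := by
  obtain ⟨H, hH0, hH, hvanish⟩ := exists_auxiliary_function hG hB hq hab hg
  have hle : 2 * S.card ≤ Nat.card K + (2 * g + 1) * p ^ b - 1 :=
    two_mul_card_le_of_isRoot hG hB hH0 hH fun y hy => by
      obtain ⟨w, w', hne, hw, hw'⟩ := hS y hy
      exact isRoot_re_im_of_evalAt_eq_zero hne hw hw' (hvanish _) (hvanish _)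
  have hpos : 0 < Nat.card K := Nat.card_pos
  omega

end Points

end HyperellipticRing

section ArtinSchreier

lemma card_subtype_map_eq {X A C : Type*} [AddGroup A] [AddGroup C] (φ : A →+ C) (Q : X → Prop)
    (c : X → C) :
    Nat.card {p : X × A // Q p.1 ∧ φ p.2 = c p.1} =
      Nat.card {x // Q x ∧ c x ∈ φ.range} * Nat.card φ.ker := by
  choose z hz using fun x : {x // Q x ∧ c x ∈ φ.range} => x.2.2
  rw [← Nat.card_prod]
  exact Nat.card_congr
    { toFun p := (⟨p.1.1, p.2.1, p.1.2, p.2.2⟩,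
        ⟨-z ⟨p.1.1, p.2.1, p.1.2, p.2.2⟩ + p.1.2, by simp [AddMonoidHom.mem_ker, hz, p.2.2]⟩)
      invFun q := ⟨(q.1, z q.1 + q.2), q.1.2.1, by
        rw [map_add, hz, AddMonoidHom.mem_ker.1 q.2.2, add_zero]⟩
      left_inv p := by simp
      right_inv q := by simp }

variable (K : Type*) [Field K] [CharP K 2]

/-- The Artin–Schreier map `z ↦ z² + z` in characteristic two. -/
def artinSchreier : K →+ K :=
  (frobenius K 2).toAddMonoidHom + AddMonoidHom.id K

variable {K} in
lemma artinSchreier_apply (z : K) : artinSchreier K z = z ^ 2 + z :=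
  rfl

lemma card_ker_artinSchreier : Nat.card (artinSchreier K).ker = 2 := by
  have hker : ((artinSchreier K).ker : Set K) = {0, 1} := by
    ext z
    rw [SetLike.mem_coe, AddMonoidHom.mem_ker, artinSchreier_apply, sq, ← mul_add_one,
      mul_eq_zero, CharTwo.add_eq_zero]
    rfl
  rw [← SetLike.coe_sort_coe, hker, Nat.card_coe_set_eq, Set.ncard_pair zero_ne_one]

lemma exists_forall_mem_or_add_mem_range_artinSchreier [Finite K] :
    ∃ δ, ∀ c, c + δ ∈ (artinSchreier K).range ∨ c ∈ (artinSchreier K).range := by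
  have hindex : (artinSchreier K).range.index = 2 :=
    AddSubgroup.index_range.trans (card_ker_artinSchreier K)
  obtain ⟨δ, -, hδ⟩ := AddSubgroup.index_eq_two_iff_exists_notMem_and.1 hindex
  exact ⟨δ, hδ⟩

/- With `w = B z` the equation `z² + z = A / B` becomes `w² = B w + A B`, whose second root is
`w + B`. -/
theorem two_mul_card_lt_of_mem_range_artinSchreier {K : Type*} [Field K] [CharP K 2] [Finite K]
    {A B : K[X]} {g : ℕ} (hAB : A.natDegree + B.natDegree = 2 * g + 1) (hB : B.natDegree ≤ g)
    (hB0 : B ≠ 0) {a b : ℕ} (hq : Nat.card K = 2 ^ a * 2 ^ b) (hab : a ≤ b)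
    (hg : (g + 1) ^ 2 < 2 ^ b) {S : Finset K}
    (hS : ∀ y ∈ S, B.eval y ≠ 0 ∧ A.eval y / B.eval y ∈ (artinSchreier K).range) :
    2 * S.card < Nat.card K + (2 * g + 1) * 2 ^ b := by
  have hA0 : A ≠ 0 := ne_zero_of_natDegree_gt (n := 0) (by omega)
  have hG : (A * B).natDegree = 2 * g + 1 := by rw [natDegree_mul hA0 hB0, hAB]
  refine HyperellipticRing.two_mul_card_lt_of_two_points hG hB hq hab hg fun y hy => ?_
  obtain ⟨hBy, z, hz⟩ := hS y hy
  rw [artinSchreier_apply, eq_div_iff hBy] at hz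
  refine ⟨B.eval y * z, B.eval y * z + B.eval y, by simpa using hBy, ?_, ?_⟩ <;> rw [eval_mul]
  · linear_combination B.eval y * hz - B.eval y ^ 2 * z * CharTwo.two_eq_zero (R := K)
  · linear_combination B.eval y * hz

end ArtinSchreier

section ClearingDenominators

variable {K : Type*} [Field K]

lemma exists_eval_eq_pow_mul_eval_div (P : K[X]) {n l : K[X]} (hn : n.natDegree ≤ 1)
    (hl : l.natDegree ≤ 1) :
    ∃ Q : K[X], Q.natDegree ≤ P.natDegree ∧ ∀ y, l.eval y ≠ 0 →
      Q.eval y = l.eval y ^ P.natDegree * P.eval (n.eval y / l.eval y) := by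
  refine ⟨MvPolynomial.aeval ![n, l] (P.homogenize P.natDegree), ?_, fun y hy => ?_⟩
  · simpa using MvPolynomial.aeval_natDegree_le _ (isHomogeneous_homogenize P).totalDegree_le
      ![n, l] (Fin.forall_fin_two.2 ⟨hn, hl⟩)
  · have heval : (MvPolynomial.aeval ![n, l] (P.homogenize P.natDegree)).eval y =
        MvPolynomial.eval ![n.eval y, l.eval y] (P.homogenize P.natDegree) := by
      have hhom : (aeval y).comp (MvPolynomial.aeval ![n, l]) =
          MvPolynomial.aeval ![n.eval y, l.eval y] := by
        ext i
        fin_cases i <;> simp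
      exact DFunLike.congr_fun hhom _
    rw [heval, eval_homogenize le_rfl _ hy, mul_comm]
    rfl

lemma exists_eval_eq_prod_mul_sum_eval_div {ι : Type*} (P : K[X]) {n l : ι → K[X]}
    (hn : ∀ i, (n i).natDegree ≤ 1) (hl : ∀ i, (l i).natDegree ≤ 1) (E : Finset ι) :
    ∃ R : K[X], R.natDegree ≤ E.card * P.natDegree ∧ ∀ y, (∀ i ∈ E, (l i).eval y ≠ 0) →
      R.eval y = (∏ i ∈ E, l i ^ P.natDegree).eval y *
        ∑ i ∈ E, P.eval ((n i).eval y / (l i).eval y) := by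
  classical
  have hprod (E : Finset ι) : (∏ i ∈ E, l i ^ P.natDegree).natDegree ≤ E.card * P.natDegree :=
    (natDegree_prod_le _ _).trans <| Finset.sum_le_card_nsmul _ _ _ fun i _ =>
      (natDegree_pow_le_of_le _ (hl i)).trans_eq (mul_one _)
  induction E using Finset.induction_on with
  | empty => exact ⟨0, by simp⟩
  | insert i E hi ih =>
    obtain ⟨R, hR, hReval⟩ := ih
    obtain ⟨Q, hQ, hQeval⟩ := exists_eval_eq_pow_mul_eval_div P (hn i) (hl i)
    refine ⟨Q * ∏ k ∈ E, l k ^ P.natDegree + l i ^ P.natDegree * R, ?_, fun y hy => ?_⟩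
    · rw [Finset.card_insert_of_notMem hi, add_one_mul, add_comm (E.card * _)]
      exact natDegree_add_le_of_degree_le (natDegree_mul_le_of_le hQ (hprod E))
        (natDegree_mul_le_of_le ((natDegree_pow_le_of_le _ (hl i)).trans_eq (mul_one _)) hR)
    · rw [Finset.forall_mem_insert] at hy
      rw [Finset.prod_insert hi, Finset.sum_insert hi, eval_add, eval_mul, eval_mul, eval_mul,
        hQeval y hy.1, hReval y hy.2, eval_pow]
      ring

lemma natDegree_prod_pow_of_natDegree_eq_one {ι : Type*} {l : ι → K[X]} {E : Finset ι} (t : ℕ)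
    (hl : ∀ i ∈ E, (l i).natDegree = 1) :
    ∏ i ∈ E, l i ^ t ≠ 0 ∧ (∏ i ∈ E, l i ^ t).natDegree = E.card * t := by
  have hl0 (i : ι) (hi : i ∈ E) : l i ^ t ≠ 0 :=
    pow_ne_zero _ (ne_zero_of_natDegree_gt (n := 0) (by rw [hl i hi]; exact one_pos))
  refine ⟨Finset.prod_ne_zero_iff.2 hl0, ?_⟩
  rw [natDegree_prod _ _ hl0, Finset.sum_const_nat fun i hi => by
    rw [natDegree_pow, hl i hi, mul_one]]

/-- The linear polynomial obtained from `c x + d` by the substitution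
`y = (α x + β) / (κ x + υ)`, that is `x = (υ y - β) / (α - κ y)`, after multiplication by
`α - κ y`. -/
noncomputable def mobiusSubst (α β κ υ c d : K) : K[X] :=
  C (c * υ - d * κ) * X + C (d * α - c * β)

lemma eval_mobiusSubst (α β c d : K) {κ υ x : K} (hx : κ * x + υ ≠ 0) :
    (mobiusSubst α β κ υ c d).eval ((α * x + β) / (κ * x + υ)) =
      (α * υ - β * κ) / (κ * x + υ) * (c * x + d) := by
  simp only [mobiusSubst, eval_add, eval_mul, eval_C, eval_X]
  field_simp
  ring

lemma mobius_injOn {α β κ υ : K} (hdet : α * υ - β * κ ≠ 0) :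
    Set.InjOn (fun x => (α * x + β) / (κ * x + υ)) {x | κ * x + υ ≠ 0} := by
  intro x hx x' hx' h
  rw [div_eq_div_iff hx hx'] at h
  exact sub_eq_zero.1 <| (mul_eq_zero_iff_left hdet).1 (by linear_combination h)

variable {ι : Type*} [Fintype ι]

/-- The rational function `∑ᵢ P((αᵢ x + βᵢ) / (κᵢ x + υᵢ))`, meaningful where no denominator
vanishes. -/
noncomputable def mobiusSum (P : K[X]) (α β κ υ : ι → K) (x : K) : K :=
  ∑ i, P.eval ((α i * x + β i) / (κ i * x + υ i))

variable (P : K[X]) {α β κ υ : ι → K} {j : ι}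

/- In the coordinate `y = (α_j x + β_j) / (κ_j x + υ_j)` the `j`-th summand becomes the polynomial
`P(y)`, and the other summands have their poles at finite values of `y`. -/
theorem exists_mobiusSum_add_eq_div (hP : 0 < P.natDegree) (hdet : α j * υ j - β j * κ j ≠ 0)
    (hj : ∀ i ≠ j, κ i * υ j - υ i * κ j ≠ 0) (θ : K) :
    ∃ A B : K[X], B ≠ 0 ∧ B.natDegree + P.natDegree = Fintype.card ι * P.natDegree ∧
      A.natDegree = Fintype.card ι * P.natDegree ∧
      ∀ x y, (∀ i, κ i * x + υ i ≠ 0) → y = (α j * x + β j) / (κ j * x + υ j) →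
        B.eval y ≠ 0 ∧ A.eval y / B.eval y = mobiusSum P α β κ υ x + θ := by
  classical
  let l (i : ι) : K[X] := mobiusSubst (α j) (β j) (κ j) (υ j) (κ i) (υ i)
  let n (i : ι) : K[X] := mobiusSubst (α j) (β j) (κ j) (υ j) (α i) (β i)
  let E := Finset.univ.erase j
  let B := ∏ i ∈ E, l i ^ P.natDegree
  have hE : E.card + 1 = Fintype.card ι := Finset.card_erase_add_one (Finset.mem_univ j)
  obtain ⟨hB0, hB⟩ : B ≠ 0 ∧ B.natDegree = E.card * P.natDegree :=
    natDegree_prod_pow_of_natDegree_eq_one _ fun i hi =>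
      natDegree_linear (hj i (Finset.ne_of_mem_erase hi))
  obtain ⟨R, hR, hReval⟩ := exists_eval_eq_prod_mul_sum_eval_div P (n := n) (l := l)
    (fun i => natDegree_linear_le) (fun i => natDegree_linear_le) E
  have hPθ : (B * (P + C θ)).natDegree = E.card * P.natDegree + P.natDegree := by
    rw [natDegree_mul hB0 (ne_zero_of_natDegree_gt (n := 0) (by rwa [natDegree_add_C])), hB,
      natDegree_add_C]
  rw [← hE, add_one_mul]
  refine ⟨B * (P + C θ) + R, B, hB0, by rw [hB], ?_, ?_⟩
  · rw [natDegree_add_eq_left_of_natDegree_lt (by omega), hPθ]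
  rintro x y hx rfl
  have hfactor : (α j * υ j - β j * κ j) / (κ j * x + υ j) ≠ 0 := div_ne_zero hdet (hx j)
  have hly (i : ι) : (l i).eval ((α j * x + β j) / (κ j * x + υ j)) ≠ 0 := by
    rw [eval_mobiusSubst _ _ _ _ (hx j)]
    exact mul_ne_zero hfactor (hx i)
  have hBy : B.eval ((α j * x + β j) / (κ j * x + υ j)) ≠ 0 := by
    simpa only [B, eval_prod, eval_pow] using
      Finset.prod_ne_zero_iff.2 fun i _ => pow_ne_zero _ (hly i)
  refine ⟨hBy, ?_⟩
  rw [div_eq_iff hBy, eval_add, hReval _ fun i _ => hly i, mobiusSum,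
    ← Finset.add_sum_erase _ _ (Finset.mem_univ j)]
  simp only [n, l, eval_mobiusSubst _ _ _ _ (hx j), mul_div_mul_left _ _ hfactor, eval_mul,
    eval_add, eval_C]
  ring

end ClearingDenominators

section PointCount

variable {K ι : Type*} [Field K] [Fintype ι] (P : K[X]) {α β κ υ : ι → K} {j : ι}

theorem two_mul_card_add_lt_of_mobiusSum_mem_range [Finite K] [CharP K 2] (hP : Odd P.natDegree)
    (hdet : α j * υ j - β j * κ j ≠ 0) (hj : ∀ i ≠ j, κ i * υ j - υ i * κ j ≠ 0) (θ : K)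
    {a b : ℕ} (hq : Nat.card K = 2 ^ a * 2 ^ b) (hab : a ≤ b)
    (hb : (Fintype.card ι * P.natDegree) ^ 2 < 2 ^ b) {S : Finset K}
    (hS : ∀ x ∈ S, (∀ i, κ i * x + υ i ≠ 0) ∧
      mobiusSum P α β κ υ x + θ ∈ (artinSchreier K).range) :
    2 * S.card + P.natDegree * 2 ^ b <
      Nat.card K + 2 * (Fintype.card ι * P.natDegree) * 2 ^ b := by
  classical
  obtain ⟨A, B, hB0, hB, hA, hAB⟩ := exists_mobiusSum_add_eq_div P hP.pos hdet hj θ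
  obtain ⟨k, hk⟩ := hP
  have hgenus : A.natDegree + B.natDegree = 2 * (B.natDegree + k) + 1 := by omega
  have hsmall : (B.natDegree + k + 1) ^ 2 < 2 ^ b :=
    (Nat.pow_le_pow_left (by omega) 2).trans_lt hb
  have hinj : Set.InjOn (fun x => (α j * x + β j) / (κ j * x + υ j)) S :=
    (mobius_injOn hdet).mono fun x hx => (hS x hx).1 j
  have hbound := two_mul_card_lt_of_mem_range_artinSchreier hgenus (by omega) hB0 hq hab hsmall
    (S := S.image fun x => (α j * x + β j) / (κ j * x + υ j)) <| by
      rw [Finset.forall_mem_image]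
      intro x hx
      obtain ⟨hBy, hdiv⟩ := hAB x _ (hS x hx).1 rfl
      exact ⟨hBy, hdiv ▸ (hS x hx).2⟩
  rw [Finset.card_image_of_injOn hinj] at hbound
  have hdeg : 2 * (Fintype.card ι * P.natDegree) = 2 * (B.natDegree + k) + 1 + P.natDegree := by
    omega
  rw [hdeg, add_mul _ P.natDegree]
  omega

lemma card_le_card_ne_zero_add [Fintype K] [DecidableEq K]
    (hκυ : ∀ i, ¬ (κ i = 0 ∧ υ i = 0)) :
    Fintype.card K ≤ ({x | ∀ i, κ i * x + υ i ≠ 0} : Finset K).card + Fintype.card ι := by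
  have hroots (i : ι) : ({x | κ i * x + υ i = 0} : Finset K).card ≤ 1 := by
    refine Finset.card_le_one.2 fun x hx x' hx' => ?_
    simp only [Finset.mem_filter, Finset.mem_univ, true_and] at hx hx'
    have hκ : κ i ≠ 0 := fun h => hκυ i ⟨h, by simpa [h] using hx⟩
    exact mul_left_cancel₀ hκ (by linear_combination hx - hx')
  have hcompl : ({x | ¬ ∀ i, κ i * x + υ i ≠ 0} : Finset K).card ≤ Fintype.card ι := by
    have hunion : ({x | ¬ ∀ i, κ i * x + υ i ≠ 0} : Finset K) =
        Finset.univ.biUnion fun i => {x | κ i * x + υ i = 0} := by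
      ext x
      simp
    rw [hunion]
    simpa using Finset.card_biUnion_le_card_mul Finset.univ _ 1 fun i _ => hroots i
  have hsplit := Finset.card_filter_add_card_filter_not (s := Finset.univ)
    (fun x => ∀ i, κ i * x + υ i ≠ 0)
  rw [Finset.card_univ] at hsplit
  omega

/- An upper bound for the values `x` at which `z² + z` misses the right-hand side: these lie under
points of the curve with `θ` replaced by `θ + δ`. -/
theorem card_add_le_card_points [Finite K] [CharP K 2] (hP : Odd P.natDegree)
    (hdet : α j * υ j - β j * κ j ≠ 0) (hj : ∀ i ≠ j, κ i * υ j - υ i * κ j ≠ 0) (θ : K)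
    {a b : ℕ} (hq : Nat.card K = 2 ^ a * 2 ^ b) (hab : a ≤ b)
    (hb : (Fintype.card ι * P.natDegree) ^ 2 < 2 ^ b) :
    Nat.card K + P.natDegree * 2 ^ b ≤
      Nat.card {p : K × K // (∀ i, κ i * p.1 + υ i ≠ 0) ∧
        p.2 ^ 2 + p.2 = mobiusSum P α β κ υ p.1 + θ} +
      2 * Fintype.card ι + 2 * (Fintype.card ι * P.natDegree) * 2 ^ b := by
  classical
  have := Fintype.ofFinite K
  obtain ⟨δ, hδ⟩ := exists_forall_mem_or_add_mem_range_artinSchreier K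
  let Y : Finset K := {x | ∀ i, κ i * x + υ i ≠ 0}
  have hsplit := Finset.card_filter_add_card_filter_not (s := Y)
    (fun x => mobiusSum P α β κ υ x + θ ∈ (artinSchreier K).range)
  have hpoints := card_subtype_map_eq (artinSchreier K) (fun x => ∀ i, κ i * x + υ i ≠ 0)
    (fun x => mobiusSum P α β κ υ x + θ)
  have hhit : Nat.card {x // (∀ i, κ i * x + υ i ≠ 0) ∧
      mobiusSum P α β κ υ x + θ ∈ (artinSchreier K).range} =
      {x ∈ Y | mobiusSum P α β κ υ x + θ ∈ (artinSchreier K).range}.card := by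
    rw [Nat.card_eq_fintype_card, Fintype.card_subtype, Finset.filter_filter]
  have hmissed := two_mul_card_add_lt_of_mobiusSum_mem_range P hP hdet hj (θ + δ) hq hab hb
    (S := {x ∈ Y | mobiusSum P α β κ υ x + θ ∉ (artinSchreier K).range}) fun x hx => by
      obtain ⟨hxY, hx⟩ := Finset.mem_filter.1 hx
      exact ⟨(Finset.mem_filter.1 hxY).2, add_assoc _ θ δ ▸ (hδ _).resolve_right hx⟩
  have hY : Fintype.card K ≤ Y.card + Fintype.card ι := card_le_card_ne_zero_add fun i => by
    rintro ⟨hκ, hυ⟩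
    rcases eq_or_ne i j with rfl | hi
    · exact hdet (by simp [hκ, hυ])
    · exact hj i hi (by simp [hκ, hυ])
  rw [card_ker_artinSchreier, hhit] at hpoints
  simp only [artinSchreier_apply] at hpoints
  rw [Nat.card_eq_fintype_card (α := K)] at hmissed ⊢
  omega

end PointCount

lemma two_rpow_half_sq (m : ℕ) : ((2 : ℝ) ^ ((m : ℝ) / 2)) ^ 2 = 2 ^ m := by
  rw [← Real.rpow_mul_natCast zero_le_two, Nat.cast_ofNat, div_mul_cancel₀ _ two_ne_zero,
    Real.rpow_natCast]

lemma two_rpow_half_le_two_pow (m : ℕ) : (2 : ℝ) ^ ((m : ℝ) / 2) ≤ 2 ^ ((m + 1) / 2) := by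
  refine le_of_sq_le_sq ?_ (by positivity)
  rw [two_rpow_half_sq, ← pow_mul]
  exact pow_le_pow_right₀ one_le_two (by omega)

lemma two_pow_le_two_rpow_half (m : ℕ) :
    (2 : ℝ) ^ ((m + 1) / 2) ≤ 3 / 2 * 2 ^ ((m : ℝ) / 2) := by
  refine le_of_sq_le_sq ?_ (by positivity)
  calc ((2 : ℝ) ^ ((m + 1) / 2)) ^ 2 ≤ 2 ^ (m + 1) := by
        rw [← pow_mul]
        exact pow_le_pow_right₀ one_le_two (by omega)
    _ ≤ (3 / 2) ^ 2 * 2 ^ m := by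
        rw [pow_succ']
        gcongr
        norm_num
    _ = (3 / 2 * 2 ^ ((m : ℝ) / 2)) ^ 2 := by rw [mul_pow, two_rpow_half_sq]

lemma hasseWeil_bound_pos {u D r : ℝ} (hD : 1 ≤ D) (hrD : r ≤ D) (hDu : D ≤ u - 1) :
    0 < u ^ 4 - 1 - (D + 1) * D * u ^ 2 - r * (D + 2) := by
  have hmain : (D + 1) * D * u ^ 2 ≤ u * (u - 1) * u ^ 2 := by gcongr <;> linarith
  have hrest : r * (D + 2) ≤ (u - 1) * (u + 1) :=
    mul_le_mul (hrD.trans hDu) (by linarith) (by linarith) (by linarith)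
  have hpos : 0 < u ^ 2 * (u - 1) := mul_pos (by nlinarith) (by linarith)
  linarith

lemma hasseWeil_bound_le {σ s D r t N : ℝ} (hD : 1 ≤ D) (hr : 0 ≤ r) (ht : 1 ≤ t) (hs : 0 ≤ s)
    (hsσ : s ≤ 3 / 2 * σ) (hN : σ ^ 2 + t * s ≤ N + 2 * r + 2 * D * s) :
    σ ^ 2 - 1 - (D + 1) * D * σ - r * (D + 2) ≤ N := by
  have hmain : 2 * D * s - t * s ≤ (D + 1) * D * σ :=
    calc 2 * D * s - t * s ≤ (2 * D - 1) * s := by nlinarith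
      _ ≤ (2 * D - 1) * (3 / 2 * σ) := mul_le_mul_of_nonneg_left hsσ (by linarith)
      _ = (2 * D - 1) * (3 / 2) * σ := by ring
      _ ≤ (D + 1) * D * σ :=
        mul_le_mul_of_nonneg_right (by nlinarith [sq_nonneg (D - 1)]) (by linarith)
  have hrD : 0 ≤ r * D := mul_nonneg hr (by linarith)
  linarith

/- For `2 ^ (m / 2) ≤ (rt + 1) rt` the right-hand side is negative, so that the condition
`(rt) ^ 2 < 2 ^ b` under which the point count was bounded may be assumed. -/
theorem hasseWeil_bound_le_card_points {K ι : Type*} [Field K] [CharP K 2] [Fintype ι] {m : ℕ}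
    (hK : Nat.card K = 2 ^ m) (P : K[X]) (hP : Odd P.natDegree) {α β κ υ : ι → K} {j : ι}
    (hdet : α j * υ j - β j * κ j ≠ 0) (hj : ∀ i ≠ j, κ i * υ j - υ i * κ j ≠ 0) (θ : K) :
    (2 : ℝ) ^ m - 1 -
        (Fintype.card ι * P.natDegree + 1) * (Fintype.card ι * P.natDegree) * 2 ^ ((m : ℝ) / 2) -
        Fintype.card ι * (Fintype.card ι * P.natDegree + 2) ≤
      Nat.card {p : K × K // (∀ i, κ i * p.1 + υ i ≠ 0) ∧
        p.2 ^ 2 + p.2 = mobiusSum P α β κ υ p.1 + θ} := by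
  have : Finite K := Nat.finite_of_card_ne_zero (by simp [hK])
  have hr : (1 : ℝ) ≤ Fintype.card ι := by exact_mod_cast Fintype.card_pos_iff.2 ⟨j⟩
  have ht : (1 : ℝ) ≤ P.natDegree := by exact_mod_cast hP.pos
  have hD : (1 : ℝ) ≤ Fintype.card ι * P.natDegree := one_le_mul_of_one_le_of_one_le hr ht
  have hσ := two_rpow_half_sq m
  have hσs := two_rpow_half_le_two_pow m
  have hsσ := two_pow_le_two_rpow_half m
  have hσ0 : (0 : ℝ) < 2 ^ ((m : ℝ) / 2) := by positivity
  rw [← hσ]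
  set σ : ℝ := 2 ^ ((m : ℝ) / 2)
  set D : ℝ := Fintype.card ι * P.natDegree with hDdef
  rcases le_or_gt σ ((D + 1) * D) with hsmall | hlarge
  · refine le_trans ?_ (Nat.cast_nonneg _)
    have hle : σ ^ 2 ≤ (D + 1) * D * σ := by nlinarith
    have hrest : 0 ≤ (Fintype.card ι : ℝ) * (D + 2) := by positivity
    linarith
  · have hb : (Fintype.card ι * P.natDegree) ^ 2 < 2 ^ ((m + 1) / 2) := by
      have hreal : D ^ 2 < 2 ^ ((m + 1) / 2) := by nlinarith
      rw [hDdef] at hreal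
      exact_mod_cast hreal
    have hq : Nat.card K = 2 ^ (m / 2) * 2 ^ ((m + 1) / 2) := by
      rw [hK, ← pow_add]
      congr 1
      omega
    have hcount := card_add_le_card_points P hP hdet hj θ hq (by omega) hb
    rw [hK] at hcount
    refine hasseWeil_bound_le hD (by positivity) ht (by positivity) hsσ ?_
    rw [hσ, hDdef]
    exact_mod_cast hcount

lemma ne_div_iff_mul_add_ne_zero {K : Type*} [Field K] [CharP K 2] {κ υ x : K} (hκ : κ ≠ 0) :
    x ≠ υ / κ ↔ κ * x + υ ≠ 0 := by
  rw [ne_eq, eq_div_iff hκ, mul_comm, ← CharTwo.add_eq_zero]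

theorem curve_affine_point_count_general {K ι : Type*} [Field K] [Fintype ι] (m : ℕ)
    (hK : Nat.card K = 2 ^ m) (P : K[X]) (hP : Odd P.natDegree) (α β κ υ : ι → K) (j : ι)
    (hdet : α j * υ j - β j * κ j ≠ 0) (hj : ∀ i ≠ j, κ i * υ j - υ i * κ j ≠ 0) (θ : K) (N : ℕ)
    (hN : N = Nat.card {p : K × K // (∀ i, κ i * p.1 + υ i ≠ 0) ∧
      p.2 ^ 2 + p.2 = (∑ i, P.eval ((α i * p.1 + β i) / (κ i * p.1 + υ i))) + θ}) :
    (2 : ℝ) ^ m - 1 -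
        (Fintype.card ι * P.natDegree + 1) * (Fintype.card ι * P.natDegree) * 2 ^ ((m : ℝ) / 2) -
        Fintype.card ι * (Fintype.card ι * P.natDegree + 2) ≤ N ∧
    ((Fintype.card ι * P.natDegree : ℝ) ≤ 2 ^ ((m : ℝ) / 4) - 1 → 0 < N) := by
  have : Finite K := Nat.finite_of_card_ne_zero (by simp [hK])
  have := Fintype.ofFinite K
  have : CharP K 2 := charP_of_card_eq_prime_pow (Nat.card_eq_fintype_card.symm.trans hK)
  have hbound := hasseWeil_bound_le_card_points hK P hP hdet hj θ
  refine ⟨hN ▸ hbound, fun hD => ?_⟩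
  have hr : (1 : ℝ) ≤ Fintype.card ι := by exact_mod_cast Fintype.card_pos_iff.2 ⟨j⟩
  have ht : (1 : ℝ) ≤ P.natDegree := by exact_mod_cast hP.pos
  have hpos := hasseWeil_bound_pos (one_le_mul_of_one_le_of_one_le hr ht)
    (le_mul_of_one_le_right (by positivity) ht) hD
  have hu : ((2 : ℝ) ^ ((m : ℝ) / 4)) ^ 2 = 2 ^ ((m : ℝ) / 2) := by
    rw [← Real.rpow_mul_natCast zero_le_two]
    congr 1
    push_cast
    ring
  rw [show 4 = 2 * 2 from rfl, pow_mul, hu, two_rpow_half_sq] at hpos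
  exact_mod_cast hpos.trans_le (hN ▸ hbound)

/-- Lemma 4.6: the number `N` of affine rational points `(x,z)` with
`z² + z = Σᵢ P((αᵢx+βᵢ)/(κᵢx+υᵢ)) + θ` and `x ≠ υᵢ/κᵢ` satisfies the Hasse–Weil type
bound `N ≥ 2^m − 1 − (rt+1)rt·2^{m/2} − r(rt+2)`; in particular, if `m ≥ 4` and
`rt ≤ 2^{m/4} − 1`, then `N > 0`. -/
theorem curve_affine_point_count
    (m r : ℕ) (hm : 1 ≤ m) (hr : 1 ≤ r)
    (P : Polynomial (GaloisField 2 m)) (t : ℕ) (ht : P.natDegree = t) (htodd : Odd t)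
    (α β κ υ : Fin r → GaloisField 2 m)
    (hκ : ∀ i, κ i ≠ 0) (hnd : ∀ i, α i * υ i + β i * κ i ≠ 0)
    (hj : ∃ j, ∀ i, i ≠ j → υ j / κ j ≠ υ i / κ i)
    (θ : GaloisField 2 m) (N : ℕ)
    (hN : N = Nat.card {p : GaloisField 2 m × GaloisField 2 m //
      (∀ i, p.1 ≠ υ i / κ i) ∧
      p.2 ^ 2 + p.2 = (∑ i, P.eval ((α i * p.1 + β i) / (κ i * p.1 + υ i))) + θ}) :
    (N : ℝ) ≥ (2 : ℝ) ^ m - 1 -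
        ((r * t + 1 : ℕ) : ℝ) * ((r * t : ℕ) : ℝ) * (2 : ℝ) ^ ((m : ℝ) / 2) -
        ((r * (r * t + 2) : ℕ) : ℝ) ∧
    (4 ≤ m → ((r * t : ℕ) : ℝ) ≤ (2 : ℝ) ^ ((m : ℝ) / 4) - 1 → 0 < N) := by
  obtain ⟨j, hj⟩ := hj
  subst ht hN
  have hdet : α j * υ j - β j * κ j ≠ 0 := by rw [CharTwo.sub_eq_add]; exact hnd j
  have hpoles (i : Fin r) (hi : i ≠ j) : κ i * υ j - υ i * κ j ≠ 0 := by
    simpa only [ne_eq, div_eq_div_iff (hκ j) (hκ i), mul_comm (υ j), sub_eq_zero] using hj i hi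
  obtain ⟨hbound, hpos⟩ := curve_affine_point_count_general m (GaloisField.card 2 m (by omega)) P
    htodd α β κ υ j hdet hpoles θ _ rfl
  have hpole (i : Fin r) (x : GaloisField 2 m) : x ≠ υ i / κ i ↔ κ i * x + υ i ≠ 0 :=
    ne_div_iff_mul_add_ne_zero (hκ i)
  simp only [hpole]
  rw [Fintype.card_fin] at hbound hpos
  push_cast
  exact ⟨hbound, fun _ => hpos⟩
end

section
/- Let m, k be positive integers such that k divides m and gcd(2^m − 1, 2^k + 1) = 1, and set e = 2^k + 1. Identify F_{2^k} with the subfield {u ∈ F_{2^m} : u^{2^k} = u} of F_{2^m}. Let P : F_{2^k} → F_{2^k} be a bijection, and let α, β, γ be nonzero elements of F_{2^k} with α + β + γ ≠ 0. Define f : F_{2^m} × F_{2^m} × F_2 × F_2 → F_2 by f(x, y, z₁, z₂) = Tr_1^k(((1 + z₁ + z₂)α + z₂β + z₁γ) · P(Tr_k^m(y · (x⁻¹)^e))) + z₁z₂, where z₁, z₂ ∈ F_2 = {0,1} are regarded as elements of F_{2^k}. Then f is a bent function: for every nonzero (a, b, c₁, c₂) ∈ F_{2^m} × F_{2^m} ×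 F_2 × F_2, the derivative (x,y,z₁,z₂) ↦ f(x+a, y+b, z₁+c₁, z₂+c₂) + f(x,y,z₁,z₂) takes each of the values 0 and 1 exactly 2^{2m+1} times. -/
open scoped Classical

/-- The relative trace `Tr_k^m : F_{2^m} → F_{2^k}`, with `F_{2^k}` identified with the
subfield `{u : u^{2^k} = u}` of `F_{2^m}`. -/
noncomputable def TrRel (k m : ℕ) (x : GaloisField 2 m) : GaloisField 2 m :=
  ∑ i ∈ Finset.range (m / k), x ^ 2 ^ (k * i)

/-- The absolute trace `Tr_1^k` of the subfield `F_{2^k} = {u : u^{2^k} = u}` of `F_{2^m}`,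
with values in `F₂ = ZMod 2`: for `u` in the subfield, `∑_{i<k} u^{2^i}` lies in
`{0, 1} ⊆ F_{2^m}`, and the value is `0` or `1` accordingly. -/
noncomputable def TrSub (k m : ℕ) (u : GaloisField 2 m) : ZMod 2 :=
  if (∑ i ∈ Finset.range k, u ^ 2 ^ i) = 0 then 0 else 1

/-!
A Boolean function with flat Walsh spectrum is bent. Write `K = 𝔽_{2^m}`, `F = 𝔽_{2^k}`, and suppose
that `x ↦ x ^ e` is injective on `K` and agrees with `x ↦ x ^ 2 ^ j` on `F`; for `e = 2 ^ k + 1`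
this holds with `j = 1`.
The Walsh transform of `(x, y) ↦ Tr(c P(Tr(y x⁻ᵉ)))` at `(u, v)` is
`|K| (-1) ^ Tr(c P(Tr(u V) ^ 2 ^ j))`, where `Vᵉ = v⁻¹`. Indeed, by Fourier inversion on `F` the
function `t ↦ (-1) ^ Tr(c P(t))` may be replaced by a nontrivial character `t ↦ (-1) ^ Tr(s t)`;
summing over `y` then forces `s x⁻ᵉ = v`, whose only solution is `x = r V` with `r ^ 2 ^ j = s`.

The dual `Tr(c P(Tr(u V) ^ 2 ^ j))` is linear in `c`, and the four values of `c` in the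
concatenation sum to zero, so with the term `z₁ z₂` the four duals sum to `1`. Among the four signs
that add up to a Walsh coefficient of `f` an odd number is then negative, so their sum is `±2`.
-/

/-- The nontrivial character `z ↦ (-1) ^ z` of `𝔽₂`, with integer values. -/
def signChar : AddChar (ZMod 2) ℤ :=
  AddChar.zmodChar 2 (neg_one_sq : (-1 : ℤ) ^ 2 = 1)

lemma isPrimitive_signChar : signChar.IsPrimitive :=
  .of_ne_one (AddChar.ne_one_iff.2 ⟨1, by decide⟩)

lemma signChar_add_eq_ite (z c : ZMod 2) :
    signChar (z + c) = 2 * (if z = c then 1 else 0) - 1 := by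
  revert z c; decide

lemma sq_sum_signChar_eq_four {a b c d : ZMod 2} (h : a + b + c + d = 1) :
    (signChar a + signChar b + signChar c + signChar d) ^ 2 = 4 := by
  revert a b c d; decide

lemma two_mul_natCard_fiber_of_sum_signChar_eq_zero {ι : Type*} [Fintype ι] {g : ι → ZMod 2}
    (hg : ∑ i, signChar (g i) = 0) (c : ZMod 2) :
    2 * Nat.card {i // g i = c} = Fintype.card ι := by
  have hshift : ∑ i, signChar (g i + c) = 0 := by
    simp_rw [AddChar.map_add_eq_mul, ← Finset.sum_mul, hg, zero_mul]
  simp_rw [signChar_add_eq_ite, Finset.sum_sub_distrib, ← Finset.mul_sum,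
    Finset.sum_boole] at hshift
  rw [Nat.card_eq_fintype_card, Fintype.card_subtype]
  zify
  simpa [sub_eq_zero] using hshift

/-- Bentness of a Boolean function: all derivatives in nonzero directions are balanced.
The count is doubled so as not to divide `|V|` by two. -/
def IsBent {V : Type*} [AddGroup V] (f : V → ZMod 2) : Prop :=
  ∀ d : V, d ≠ 0 → ∀ c : ZMod 2, 2 * Nat.card {x : V // f (x + d) + f x = c} = Nat.card V

lemma IsBent.comp_addEquiv {V W : Type*} [AddGroup V] [AddGroup W] {f : W → ZMod 2}
    (hf : IsBent f) (φ : V ≃+ W) : IsBent (f ∘ φ) := by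
  intro d hd c
  rw [Nat.card_congr φ.toEquiv, ← hf (φ d) (by simpa using hd) c]
  congr 1
  exact Nat.card_congr (φ.toEquiv.subtypeEquiv fun x => by simp)

lemma IsBent.natCard_derivative_fiber {V : Type*} [AddGroup V] {f : V → ZMod 2} (hf : IsBent f)
    {n : ℕ} (hV : Nat.card V = 2 * n) {d : V} (hd : d ≠ 0) (c : ZMod 2) :
    Nat.card {x : V // f (x + d) + f x = c} = n :=
  Nat.eq_of_mul_eq_mul_left two_pos ((hf d hd c).trans hV)

section Walsh

variable {R : Type*} [CommRing R] [Fintype R]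

/-- The Walsh transform of a Boolean function on a finite commutative ring, the ring being
identified with its dual group through the character `ψ`. -/
def walsh (ψ : AddChar R ℤ) (f : R → ZMod 2) (u : R) : ℤ :=
  ∑ x, signChar (f x) * ψ (u * x)

lemma walsh_add_const (ψ : AddChar R ℤ) (f : R → ZMod 2) (c : ZMod 2) (u : R) :
    walsh ψ (fun x => f x + c) u = walsh ψ f u * signChar c := by
  simp only [walsh, AddChar.map_add_eq_mul, Finset.sum_mul, mul_right_comm]

variable {ψ : AddChar R ℤ}

lemma sum_walsh_sq_mul [CharP R 2] (hψ : ψ.IsPrimitive) (f : R → ZMod 2) (d : R) :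
    ∑ u, walsh ψ f u ^ 2 * ψ (u * d) =
      Fintype.card R * ∑ x, signChar (f (x + d) + f x) := by
  have expand (u : R) : walsh ψ f u ^ 2 * ψ (u * d) =
      ∑ x, ∑ y, signChar (f y) * signChar (f x) * ψ (u * (y + (x + d))) := by
    rw [walsh, sq, Finset.sum_mul_sum]
    simp only [Finset.sum_mul]
    refine Finset.sum_congr rfl fun x _ => Finset.sum_congr rfl fun y _ => ?_
    simp only [mul_add, AddChar.map_add_eq_mul]
    ring
  simp_rw [expand]
  rw [Finset.sum_comm, Finset.mul_sum]
  refine Finset.sum_congr rfl fun x _ => ?_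
  rw [Finset.sum_comm]
  simp only [← Finset.mul_sum, AddChar.sum_mulShift _ hψ, CharTwo.add_eq_zero,
    AddChar.map_add_eq_mul]
  simp [mul_comm]

theorem isBent_of_walsh_sq_eq_card [CharP R 2] (hψ : ψ.IsPrimitive) {f : R → ZMod 2}
    (hf : ∀ u, walsh ψ f u ^ 2 = Fintype.card R) : IsBent f := by
  intro d hd c
  have hcard : (Fintype.card R : ℤ) ≠ 0 := by exact_mod_cast Fintype.card_ne_zero
  have hsum : ∑ x, signChar (f (x + d) + f x) = 0 := by
    apply mul_left_cancel₀ hcard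
    rw [← sum_walsh_sq_mul hψ]
    simp [hf, ← Finset.mul_sum, AddChar.sum_mulShift _ hψ, hd]
  rw [two_mul_natCard_fiber_of_sum_signChar_eq_zero hsum, Nat.card_eq_fintype_card]

end Walsh

/-- The character `(x, y) ↦ ψ x * χ y` of a product. -/
def prodChar {A B M : Type*} [AddMonoid A] [AddMonoid B] [CommMonoid M]
    (ψ : AddChar A M) (χ : AddChar B M) : AddChar (A × B) M :=
  ψ.compAddMonoidHom (AddMonoidHom.fst A B) * χ.compAddMonoidHom (AddMonoidHom.snd A B)

lemma prodChar_apply {A B M : Type*} [AddMonoid A] [AddMonoid B] [CommMonoid M]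
    (ψ : AddChar A M) (χ : AddChar B M) (p : A × B) : prodChar ψ χ p = ψ p.1 * χ p.2 := rfl

lemma isPrimitive_prodChar {R S M : Type*} [CommRing R] [CommRing S] [CommMonoid M]
    {ψ : AddChar R M} {χ : AddChar S M} (hψ : ψ.IsPrimitive) (hχ : χ.IsPrimitive) :
    (prodChar ψ χ).IsPrimitive := by
  rintro ⟨a, b⟩ hab htriv
  have heval (x : R) (y : S) : ψ (a * x) * χ (b * y) = 1 := DFunLike.congr_fun htriv (x, y)
  have ha : a = 0 := by
    by_contra ha
    exact hψ ha (DFunLike.ext _ _ fun x => by simpa using heval x 0)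
  have hb : b = 0 := by
    by_contra hb
    exact hχ hb (DFunLike.ext _ _ fun y => by simpa using heval 0 y)
  exact hab (Prod.ext ha hb)

lemma sum_zmod_two {M : Type*} [AddCommMonoid M] (g : ZMod 2 → M) : ∑ z, g z = g 0 + g 1 :=
  Fin.sum_univ_two g

section Concatenation

variable {R : Type*} [CommRing R] [Fintype R] {ψ : AddChar R ℤ}

lemma walsh_concatenation (f : ZMod 2 → ZMod 2 → R → ZMod 2) (u : R) (w₁ w₂ : ZMod 2) :
    walsh (prodChar ψ (prodChar signChar signChar))
        (fun p : R × ZMod 2 × ZMod 2 => f p.2.1 p.2.2 p.1) (u, w₁, w₂) =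
      walsh ψ (f 0 0) u + signChar w₂ * walsh ψ (f 0 1) u +
        signChar w₁ * walsh ψ (f 1 0) u + signChar (w₁ + w₂) * walsh ψ (f 1 1) u := by
  simp only [walsh, Fintype.sum_prod_type, prodChar_apply, Finset.mul_sum,
    sum_zmod_two, ← Finset.sum_add_distrib]
  refine Finset.sum_congr rfl fun x _ => ?_
  simp only [Prod.mk_mul_mk, mul_zero, mul_one, AddChar.map_zero_eq_one, AddChar.map_add_eq_mul]
  ring

theorem isBent_concatenation [CharP R 2] (hψ : ψ.IsPrimitive)
    {f fDual : ZMod 2 → ZMod 2 → R → ZMod 2} {n : ℤ} (hn : n ^ 2 = Fintype.card R)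
    (hf : ∀ z₁ z₂ u, walsh ψ (f z₁ z₂) u = n * signChar (fDual z₁ z₂ u))
    (hDual : ∀ u, fDual 0 0 u + fDual 0 1 u + fDual 1 0 u + fDual 1 1 u = 1) :
    IsBent fun p : R × ZMod 2 × ZMod 2 => f p.2.1 p.2.2 p.1 := by
  refine isBent_of_walsh_sq_eq_card
    (isPrimitive_prodChar hψ (isPrimitive_prodChar isPrimitive_signChar isPrimitive_signChar)) ?_
  rintro ⟨u, w₁, w₂⟩
  have hodd : fDual 0 0 u + (w₂ + fDual 0 1 u) + (w₁ + fDual 1 0 u) +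
      (w₁ + w₂ + fDual 1 1 u) = 1 := by
    linear_combination hDual u + CharTwo.add_self_eq_zero w₁ + CharTwo.add_self_eq_zero w₂
  have hwalsh : walsh (prodChar ψ (prodChar signChar signChar))
      (fun p : R × ZMod 2 × ZMod 2 => f p.2.1 p.2.2 p.1) (u, w₁, w₂) =
      n * (signChar (fDual 0 0 u) + signChar (w₂ + fDual 0 1 u) +
        signChar (w₁ + fDual 1 0 u) + signChar (w₁ + w₂ + fDual 1 1 u)) := by
    simp only [walsh_concatenation, hf, AddChar.map_add_eq_mul]
    ring
  rw [hwalsh, mul_pow, hn, sq_sum_signChar_eq_four hodd]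
  simp

end Concatenation

section Fourier

variable {R A : Type*} [CommRing R] [Fintype R] [CommRing A] [IsDomain A] {ψ : AddChar R A}

lemma card_smul_eq_sum_fourierCoeff_smul (hψ : ψ.IsPrimitive) (g : R → A) :
    (Fintype.card R : A) • g = ∑ s, (∑ t, g t * ψ (-(s * t))) • ⇑(ψ.mulShift s) := by
  ext t₀
  have hterm (s : R) : (∑ t, g t * ψ (-(s * t))) * ψ (s * t₀) = ∑ t, g t * ψ (s * (t₀ - t)) := by
    rw [Finset.sum_mul]
    refine Finset.sum_congr rfl fun t _ => ?_
    rw [mul_assoc, ← AddChar.map_add_eq_mul]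
    ring_nf
  simp only [Pi.smul_apply, smul_eq_mul, Finset.sum_apply, AddChar.mulShift_apply, hterm]
  rw [Finset.sum_comm]
  simp [← Finset.mul_sum, AddChar.sum_mulShift _ hψ, sub_eq_zero, mul_comm]

theorem linearMap_eq_of_eq_on_nontrivial_mulShift (hψ : ψ.IsPrimitive)
    (hcard : (Fintype.card R : A) ≠ 0) {L₁ L₂ : (R → A) →ₗ[A] A}
    (h : ∀ s ≠ 0, L₁ (ψ.mulShift s) = L₂ (ψ.mulShift s)) {g : R → A}
    (hg : ∑ t, g t = 0) : L₁ g = L₂ g := by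
  apply mul_left_cancel₀ hcard
  simp only [← smul_eq_mul, ← map_smul, card_smul_eq_sum_fourierCoeff_smul hψ g, map_sum]
  refine Finset.sum_congr rfl fun s _ => ?_
  rcases eq_or_ne s 0 with rfl | hs
  · simp [hg]
  · simp [h s hs]

end Fourier

section TraceChar

/-- The canonical additive character `x ↦ (-1) ^ Tr(x)` of a field of characteristic two. -/
noncomputable def traceChar (K : Type*) [Field K] [Algebra (ZMod 2) K] : AddChar K ℤ :=
  signChar.compAddMonoidHom (Algebra.trace (ZMod 2) K).toAddMonoidHom

lemma traceChar_apply {K : Type*} [Field K] [Algebra (ZMod 2) K] (x : K) :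
    traceChar K x = signChar (Algebra.trace (ZMod 2) K x) := rfl

lemma isPrimitive_traceChar (K : Type*) [Field K] [Finite K] [Algebra (ZMod 2) K] :
    (traceChar K).IsPrimitive := by
  obtain ⟨x, hx⟩ := Algebra.trace_surjective (ZMod 2) K 1
  exact .of_ne_one (AddChar.ne_one_iff.2 ⟨x, by rw [traceChar_apply, hx]; decide⟩)

lemma traceChar_pow_two_pow {K : Type*} [Field K] [Finite K] [Algebra (ZMod 2) K] (j : ℕ) (x : K) :
    traceChar K (x ^ 2 ^ j) = traceChar K x := by
  have hfrob : (FiniteField.frobeniusAlgEquivOfAlgebraic (ZMod 2) K ^ j) x = x ^ 2 ^ j := by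
    rw [AlgEquiv.coe_pow, FiniteField.coe_frobeniusAlgEquivOfAlgebraic_iterate, ZMod.card]
  rw [traceChar_apply, traceChar_apply, ← hfrob, Algebra.trace_eq_of_algEquiv]

variable {F K : Type*} [Field F] [Field K] [Finite K] [Algebra (ZMod 2) F] [Algebra (ZMod 2) K]
  [Algebra F K] [IsScalarTower (ZMod 2) F K]

lemma traceChar_trace (x : K) : traceChar F (Algebra.trace F K x) = traceChar K x := by
  have : Finite F := Finite.of_injective _ (algebraMap F K).injective
  rw [traceChar_apply, traceChar_apply, Algebra.trace_trace]

lemma traceChar_mul_trace (s : F) (x : K) :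
    traceChar F (s * Algebra.trace F K x) = traceChar K (algebraMap F K s * x) := by
  rw [← smul_eq_mul, ← map_smul, traceChar_trace, Algebra.smul_def]

end TraceChar

section GeneralizedPSap

/-- The `c`-component `(x, y) ↦ Tr(c P(Tr(y x⁻ᵉ)))` of the vectorial generalized `PS_ap` function,
where the inner trace goes from `K` to `F` and the outer one from `F` to `𝔽₂`. -/
noncomputable def gPSap {F : Type*} (K : Type*) [Field F] [Field K] [Algebra F K]
    [Algebra (ZMod 2) F] (e : ℕ) (P : F → F) (c : F) (p : K × K) : ZMod 2 :=
  Algebra.trace (ZMod 2) F (c * P (Algebra.trace F K (p.2 * p.1⁻¹ ^ e)))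

variable {F K : Type*} [Field F] [Field K] [Algebra F K] {e j : ℕ}

lemma algebraMap_pow_mul_inv_pow_eq_iff (he : Function.Injective fun x : K => x ^ e)
    (heF : ∀ s : F, s ^ e = s ^ 2 ^ j) {r : F} (hr : r ≠ 0) {v V : K} (hV : V ^ e = v⁻¹) (x : K) :
    algebraMap F K (r ^ 2 ^ j) * x⁻¹ ^ e = v ↔ x = algebraMap F K r * V := by
  have hmap_ne : algebraMap F K (r ^ 2 ^ j) ≠ 0 := by simpa using hr
  rw [← he.eq_iff (a := x), mul_pow, ← map_pow, heF, hV, ← inv_inj, mul_inv, inv_pow, inv_inv,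
    inv_mul_eq_iff_eq_mul₀ hmap_ne]

variable [Fintype K] [Algebra (ZMod 2) F] [Algebra (ZMod 2) K] [IsScalarTower (ZMod 2) F K]

lemma sum_traceChar_mul_trace_div_pow (he : Function.Injective fun x : K => x ^ e)
    (heF : ∀ s : F, s ^ e = s ^ 2 ^ j) {s : F} (hs : s ≠ 0) (u : K) {v V : K} (hV : V ^ e = v⁻¹) :
    ∑ x : K, ∑ y : K, traceChar K (u * x) * traceChar K (v * y) *
        traceChar F (s * Algebra.trace F K (y * x⁻¹ ^ e)) =
      Fintype.card K * traceChar F (s * Algebra.trace F K (u * V) ^ 2 ^ j) := by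
  have : Finite F := Finite.of_injective _ (algebraMap F K).injective
  have : CharP F 2 := charP_of_injective_algebraMap (algebraMap (ZMod 2) F).injective 2
  have : CharP K 2 := charP_of_injective_algebraMap (algebraMap (ZMod 2) K).injective 2
  obtain ⟨r, rfl⟩ : ∃ r : F, r ^ 2 ^ j = s := (bijective_iterateFrobenius F 2 j).surjective s
  have hr : r ≠ 0 := by rintro rfl; simp at hs
  have hinner (x : K) : ∑ y : K, traceChar K (u * x) * traceChar K (v * y) *
      traceChar F (r ^ 2 ^ j * Algebra.trace F K (y * x⁻¹ ^ e)) =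
      if x = algebraMap F K r * V then Fintype.card K * traceChar K (u * x) else 0 := by
    have hterm (y : K) : traceChar K (u * x) * traceChar K (v * y) *
        traceChar F (r ^ 2 ^ j * Algebra.trace F K (y * x⁻¹ ^ e)) =
        traceChar K (u * x) * traceChar K (y * (algebraMap F K (r ^ 2 ^ j) * x⁻¹ ^ e + v)) := by
      rw [traceChar_mul_trace, mul_assoc, ← AddChar.map_add_eq_mul]
      ring_nf
    simp_rw [hterm, ← Finset.mul_sum, AddChar.sum_mulShift _ (isPrimitive_traceChar K),
      CharTwo.add_eq_zero, algebraMap_pow_mul_inv_pow_eq_iff he heF hr hV]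
    split_ifs <;> simp [mul_comm]
  simp_rw [hinner]
  rw [Finset.sum_ite_eq' Finset.univ, if_pos (Finset.mem_univ _), ← mul_pow,
    traceChar_pow_two_pow, traceChar_mul_trace, mul_left_comm]

theorem walsh_gPSap (he : Function.Injective fun x : K => x ^ e)
    (heF : ∀ s : F, s ^ e = s ^ 2 ^ j) {P : F → F} (hP : Function.Bijective P) {c : F} (hc : c ≠ 0)
    (u : K) {v V : K} (hV : V ^ e = v⁻¹) :
    walsh (prodChar (traceChar K) (traceChar K)) (gPSap K e P c) (u, v) =
      Fintype.card K *
        signChar (Algebra.trace (ZMod 2) F (c * P (Algebra.trace F K (u * V) ^ 2 ^ j))) := by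
  have : Finite F := Finite.of_injective _ (algebraMap F K).injective
  have : Fintype F := Fintype.ofFinite F
  -- Both sides are linear in the balanced function `t ↦ (-1) ^ Tr(c P(t))` on `F`, so it suffices
  -- to compare them on the nontrivial characters of `F`.
  let walshMap : (F → ℤ) →ₗ[ℤ] ℤ := ∑ x : K, ∑ y : K,
    (traceChar K (u * x) * traceChar K (v * y)) • LinearMap.proj (Algebra.trace F K (y * x⁻¹ ^ e))
  let evalMap : (F → ℤ) →ₗ[ℤ] ℤ :=
    (Fintype.card K : ℤ) • LinearMap.proj (Algebra.trace F K (u * V) ^ 2 ^ j)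
  have hbalanced : ∑ t, traceChar F (c * P t) = 0 := by
    rw [hP.sum_comp fun t => traceChar F (c * t)]
    exact AddChar.sum_eq_zero_of_ne_one (isPrimitive_traceChar F hc)
  have hchar : ∀ s ≠ 0, walshMap ((traceChar F).mulShift s) = evalMap ((traceChar F).mulShift s) :=
    fun s hs => by
      simpa [walshMap, evalMap] using sum_traceChar_mul_trace_div_pow he heF hs u hV
  have key : walshMap (fun t => traceChar F (c * P t)) = evalMap fun t => traceChar F (c * P t) :=
    linearMap_eq_of_eq_on_nontrivial_mulShift (isPrimitive_traceChar F)
      (by exact_mod_cast Fintype.card_ne_zero) hchar hbalanced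
  simpa [walshMap, evalMap, walsh, gPSap, prodChar_apply, Fintype.sum_prod_type, traceChar_apply,
    mul_comm] using key

end GeneralizedPSap

/-- The affine map `𝔽₂² → F` taking the values `α`, `β`, `γ` at `(0, 0)`, `(0, 1)`, `(1, 0)`,
which selects the component used on each of the four pieces of the concatenation. -/
def affineInterp {F : Type*} [CommRing F] [Algebra (ZMod 2) F] (α β γ : F) (z₁ z₂ : ZMod 2) : F :=
  (1 + algebraMap (ZMod 2) F z₁ + algebraMap (ZMod 2) F z₂) * α + algebraMap (ZMod 2) F z₂ * β +
    algebraMap (ZMod 2) F z₁ * γ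

section AffineInterp

variable {F : Type*} [CommRing F] [Algebra (ZMod 2) F] (α β γ : F)

lemma one_add_algebraMap_one_zmod_two : 1 + algebraMap (ZMod 2) F 1 = 0 := by
  rw [← map_one (algebraMap (ZMod 2) F), ← map_add, CharTwo.add_self_eq_zero, map_zero]

lemma affineInterp_zero_zero : affineInterp α β γ 0 0 = α := by
  simp [affineInterp]

lemma affineInterp_zero_one : affineInterp α β γ 0 1 = β := by
  simp only [affineInterp, map_zero, add_zero, one_add_algebraMap_one_zmod_two]
  simp

lemma affineInterp_one_zero : affineInterp α β γ 1 0 = γ := by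
  simp only [affineInterp, map_zero, add_zero, one_add_algebraMap_one_zmod_two]
  simp

lemma affineInterp_one_one : affineInterp α β γ 1 1 = α + β + γ := by
  simp only [affineInterp, one_add_algebraMap_one_zmod_two]
  simp

variable {α β γ}

lemma affineInterp_ne_zero (hα : α ≠ 0) (hβ : β ≠ 0) (hγ : γ ≠ 0) (hsum : α + β + γ ≠ 0)
    (z₁ z₂ : ZMod 2) : affineInterp α β γ z₁ z₂ ≠ 0 := by
  fin_cases z₁ <;> fin_cases z₂
  · exact (affineInterp_zero_zero α β γ).trans_ne hα
  · exact (affineInterp_zero_one α β γ).trans_ne hβ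
  · exact (affineInterp_one_zero α β γ).trans_ne hγ
  · exact (affineInterp_one_one α β γ).trans_ne hsum

end AffineInterp

theorem isBent_gPSap_concatenation {F K : Type*} [Field F] [Field K] [Finite K] [Algebra F K]
    [Algebra (ZMod 2) F] [Algebra (ZMod 2) K] [IsScalarTower (ZMod 2) F K] {e j : ℕ}
    (he : Function.Injective fun x : K => x ^ e) (heF : ∀ s : F, s ^ e = s ^ 2 ^ j)
    {P : F → F} (hP : Function.Bijective P) {α β γ : F}
    (hα : α ≠ 0) (hβ : β ≠ 0) (hγ : γ ≠ 0) (hsum : α + β + γ ≠ 0) :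
    IsBent fun p : K × K × ZMod 2 × ZMod 2 =>
      gPSap K e P (affineInterp α β γ p.2.2.1 p.2.2.2) (p.1, p.2.1) + p.2.2.1 * p.2.2.2 := by
  have : Fintype K := Fintype.ofFinite K
  have : CharP K 2 := charP_of_injective_algebraMap (algebraMap (ZMod 2) K).injective 2
  choose V hV using fun v : K => Finite.surjective_of_injective he v⁻¹
  let comp (z₁ z₂ : ZMod 2) (p : K × K) : ZMod 2 :=
    gPSap K e P (affineInterp α β γ z₁ z₂) p + z₁ * z₂
  let compDual (z₁ z₂ : ZMod 2) (u : K × K) : ZMod 2 :=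
    Algebra.trace (ZMod 2) F
      (affineInterp α β γ z₁ z₂ * P (Algebra.trace F K (u.1 * V u.2) ^ 2 ^ j)) + z₁ * z₂
  have hwalsh (z₁ z₂ u) : walsh (prodChar (traceChar K) (traceChar K)) (comp z₁ z₂) u =
      Fintype.card K * signChar (compDual z₁ z₂ u) := by
    rw [walsh_add_const, walsh_gPSap he heF hP (affineInterp_ne_zero hα hβ hγ hsum z₁ z₂) u.1
      (hV u.2), AddChar.map_add_eq_mul, mul_assoc]
  have hDual (u) : compDual 0 0 u + compDual 0 1 u + compDual 1 0 u + compDual 1 1 u = 1 := by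
    simp only [compDual, affineInterp_zero_zero, affineInterp_zero_one, affineInterp_one_zero,
      affineInterp_one_one, add_mul, map_add]
    generalize Algebra.trace (ZMod 2) F (α * _) = a, Algebra.trace (ZMod 2) F (β * _) = b,
      Algebra.trace (ZMod 2) F (γ * _) = c
    revert a b c
    decide
  have hbent := isBent_concatenation
    (isPrimitive_prodChar (isPrimitive_traceChar K) (isPrimitive_traceChar K))
    (n := Fintype.card K) (by simp [sq]) hwalsh hDual
  exact hbent.comp_addEquiv AddEquiv.prodAssoc.symm

section FixedField

variable (F K : Type*) [Field F] [Fintype F] [Field K] [Finite K] [Algebra F K] (k : ℕ)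

/-- The subfield `{x : x ^ |F| ^ k = x}` of a finite extension `K` of `F`, as the fixed field of
the `k`-th power of the Frobenius; it is the intermediate field of degree `k` over `F` when `k`
divides `[K : F]`. -/
noncomputable def frobeniusFixedField : IntermediateField F K :=
  IntermediateField.fixedField
    (Subgroup.zpowers (FiniteField.frobeniusAlgEquivOfAlgebraic F K ^ k))

variable {F K k}

lemma mem_frobeniusFixedField {x : K} :
    x ∈ frobeniusFixedField F K k ↔ x ^ Fintype.card F ^ k = x := by
  have hfrob : (FiniteField.frobeniusAlgEquivOfAlgebraic F K ^ k) x = x ^ Fintype.card F ^ k := by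
    rw [AlgEquiv.coe_pow, FiniteField.coe_frobeniusAlgEquivOfAlgebraic_iterate]
  rw [frobeniusFixedField, IntermediateField.mem_fixedField_iff, ← hfrob]
  refine ⟨fun h => h _ (Subgroup.mem_zpowers _), fun h => ?_⟩
  change Subgroup.zpowers _ ≤ MulAction.stabilizer Gal(K/F) x
  rwa [Subgroup.zpowers_le]

lemma finrank_frobeniusFixedField (hk : k ∣ Module.finrank F K) :
    Module.finrank (frobeniusFixedField F K k) K = Module.finrank F K / k := by
  rw [frobeniusFixedField, IntermediateField.finrank_fixedField_eq_card, Nat.card_zpowers,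
    orderOf_pow, FiniteField.orderOf_frobeniusAlgEquivOfAlgebraic, Nat.gcd_eq_right hk]

lemma finrank_base_frobeniusFixedField (hk : k ∣ Module.finrank F K) :
    Module.finrank F (frobeniusFixedField F K k) = k := by
  have htower := Module.finrank_mul_finrank F (frobeniusFixedField F K k) K
  rw [finrank_frobeniusFixedField hk] at htower
  have hpos : 0 < Module.finrank F K / k :=
    Nat.div_pos (Nat.le_of_dvd Module.finrank_pos hk) (Nat.pos_of_dvd_of_pos hk Module.finrank_pos)
  exact Nat.eq_of_mul_eq_mul_right hpos (htower.trans (Nat.mul_div_cancel' hk).symm)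

lemma natCard_frobeniusFixedField (hk : k ∣ Module.finrank F K) :
    Nat.card (frobeniusFixedField F K k) = Fintype.card F ^ k := by
  rw [Module.natCard_eq_pow_finrank (K := F), finrank_base_frobeniusFixedField hk,
    Nat.card_eq_fintype_card]

end FixedField

section PowerMaps

variable {K : Type*} [Field K]

lemma pow_injective_of_coprime_natCard_sub_one {e : ℕ} (he : e ≠ 0)
    (hcop : (Nat.card K - 1).Coprime e) :
    Function.Injective fun x : K => x ^ e := by
  intro x y (hxy : x ^ e = y ^ e)
  rcases eq_or_ne x 0 with rfl | hx
  · exact (pow_eq_zero_iff he |>.1 (hxy.symm.trans (zero_pow he))).symm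
  have hy : y ≠ 0 := by
    rintro rfl
    exact hx (pow_eq_zero_iff he |>.1 (hxy.trans (zero_pow he)))
  rw [← Nat.card_units] at hcop
  exact congrArg Units.val <| hcop.pow_left_bijective.injective
    (a₁ := Units.mk0 x hx) (a₂ := Units.mk0 y hy) (Units.ext hxy)

lemma pow_eq_pow_of_modEq_natCard_sub_one [Finite K] {a b : ℕ} (ha : a ≠ 0) (hb : b ≠ 0)
    (hab : a ≡ b [MOD Nat.card K - 1]) (x : K) : x ^ a = x ^ b := by
  rcases eq_or_ne x 0 with rfl | hx
  · rw [zero_pow ha, zero_pow hb]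
  · have : Fintype K := Fintype.ofFinite K
    exact pow_eq_pow_of_modEq hab
      (Nat.card_eq_fintype_card (α := K) ▸ FiniteField.pow_card_sub_one_eq_one x hx)

end PowerMaps

lemma two_pow_add_one_modEq (k : ℕ) : 2 ^ k + 1 ≡ 2 ^ 1 [MOD 2 ^ k - 1] := by
  have hsplit : 2 ^ k + 1 = 2 ^ k - 1 + 2 ^ 1 := by
    have := Nat.two_pow_pos k
    omega
  rw [hsplit]
  exact Nat.add_modEq_left

section GaloisField

variable {m k : ℕ}

local notation "𝔽" => frobeniusFixedField (ZMod 2) (GaloisField 2 m) k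

lemma mem_frobeniusFixedField_galoisField {x : GaloisField 2 m} : x ∈ 𝔽 ↔ x ^ 2 ^ k = x := by
  rw [mem_frobeniusFixedField, ZMod.card]

lemma TrRel_eq_trace (hm : m ≠ 0) (hkm : k ∣ m) (x : GaloisField 2 m) :
    TrRel k m x = (Algebra.trace 𝔽 (GaloisField 2 m) x : 𝔽) := by
  have hdvd : k ∣ Module.finrank (ZMod 2) (GaloisField 2 m) := by rwa [GaloisField.finrank 2 hm]
  change _ = algebraMap 𝔽 (GaloisField 2 m) _
  rw [FiniteField.algebraMap_trace_eq_sum_pow, finrank_frobeniusFixedField hdvd,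
    GaloisField.finrank 2 hm, natCard_frobeniusFixedField hdvd, ZMod.card, TrRel]
  simp_rw [pow_mul]

lemma TrSub_eq_trace (hm : m ≠ 0) (hkm : k ∣ m) (u : 𝔽) :
    TrSub k m u = Algebra.trace (ZMod 2) 𝔽 u := by
  have hdvd : k ∣ Module.finrank (ZMod 2) (GaloisField 2 m) := by rwa [GaloisField.finrank 2 hm]
  have hsum : ∑ i ∈ Finset.range k, (u : GaloisField 2 m) ^ 2 ^ i =
      algebraMap (ZMod 2) (GaloisField 2 m) (Algebra.trace (ZMod 2) 𝔽 u) := by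
    rw [IsScalarTower.algebraMap_apply (ZMod 2) 𝔽, FiniteField.algebraMap_trace_eq_sum_pow,
      finrank_base_frobeniusFixedField hdvd, Nat.card_zmod]
    simp
  rw [TrSub, hsum, FaithfulSMul.algebraMap_eq_zero_iff]
  split_ifs with htrace
  · exact htrace.symm
  · exact (Fin.eq_one_of_ne_zero _ htrace).symm

lemma natCard_galoisField_sq_prod_zmod_two_sq (hm : m ≠ 0) :
    Nat.card (GaloisField 2 m × GaloisField 2 m × ZMod 2 × ZMod 2) = 2 * 2 ^ (2 * m + 1) := by
  simp only [Nat.card_prod, GaloisField.card 2 m hm, Nat.card_zmod]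
  ring

end GaloisField

theorem concatenation_of_gPSap_components_is_bent_general
    {m k e j : ℕ} (hm : m ≠ 0) (hkm : k ∣ m) (he : e ≠ 0) (hcop : (2 ^ m - 1).Coprime e)
    (hej : e ≡ 2 ^ j [MOD 2 ^ k - 1]) {P : GaloisField 2 m → GaloisField 2 m}
    (hP : Set.BijOn P {u | u ^ 2 ^ k = u} {u | u ^ 2 ^ k = u}) {α β γ : GaloisField 2 m}
    (hα : α ^ 2 ^ k = α) (hβ : β ^ 2 ^ k = β) (hγ : γ ^ 2 ^ k = γ)
    (hα0 : α ≠ 0) (hβ0 : β ≠ 0) (hγ0 : γ ≠ 0) (hsum : α + β + γ ≠ 0)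
    {f : GaloisField 2 m × GaloisField 2 m × ZMod 2 × ZMod 2 → ZMod 2}
    (hf : ∀ x y z₁ z₂, f (x, y, z₁, z₂) =
      TrSub k m (affineInterp α β γ z₁ z₂ * P (TrRel k m (y * x⁻¹ ^ e))) + z₁ * z₂) :
    IsBent f := by
  let F := frobeniusFixedField (ZMod 2) (GaloisField 2 m) k
  have hF {x : GaloisField 2 m} : x ∈ F ↔ x ^ 2 ^ k = x := mem_frobeniusFixedField_galoisField
  have hcardF : Nat.card F = 2 ^ k := by
    rw [natCard_frobeniusFixedField (by rwa [GaloisField.finrank 2 hm]), ZMod.card]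
  have hPF : Set.BijOn P F F := by
    convert hP <;> exact Set.ext fun x => hF
  have hinj : Function.Injective fun x : GaloisField 2 m => x ^ e :=
    pow_injective_of_coprime_natCard_sub_one he (by rwa [GaloisField.card 2 m hm])
  have hpow (s : F) : s ^ e = s ^ 2 ^ j :=
    pow_eq_pow_of_modEq_natCard_sub_one he (by positivity) (by rwa [hcardF]) s
  have hbent := isBent_gPSap_concatenation hinj hpow (hPF.equiv P).bijective
    (α := ⟨α, hF.2 hα⟩) (β := ⟨β, hF.2 hβ⟩) (γ := ⟨γ, hF.2 hγ⟩)
    (by simpa [Subtype.ext_iff] using hα0) (by simpa [Subtype.ext_iff] using hβ0)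
    (by simpa [Subtype.ext_iff] using hγ0) (by simpa [Subtype.ext_iff] using hsum)
  convert hbent with p
  rw [hf p.1 p.2.1, gPSap, ← TrSub_eq_trace hm hkm, TrRel_eq_trace hm hkm]
  rfl

/-- Theorem 5.2: concatenating components of the vectorial generalized `PS_ap` bent
function gives the bent function
`f(x,y,z₁,z₂) = Tr_1^k(((1+z₁+z₂)α + z₂β + z₁γ) P(Tr_k^m(y x^{-e}))) + z₁z₂`. -/
theorem concatenation_of_gPSap_components_is_bent
    (m k : ℕ) (hm : 0 < m) (hk : 0 < k) (hkm : k ∣ m)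
    (hgcd : Nat.gcd (2 ^ m - 1) (2 ^ k + 1) = 1)
    (e : ℕ) (hee : e = 2 ^ k + 1)
    (P : GaloisField 2 m → GaloisField 2 m)
    (hPsub : Set.BijOn P {u : GaloisField 2 m | u ^ 2 ^ k = u}
      {u : GaloisField 2 m | u ^ 2 ^ k = u})
    (α β γ : GaloisField 2 m)
    (hα : α ^ 2 ^ k = α) (hβ : β ^ 2 ^ k = β) (hγ : γ ^ 2 ^ k = γ)
    (hα0 : α ≠ 0) (hβ0 : β ≠ 0) (hγ0 : γ ≠ 0) (hsum : α + β + γ ≠ 0)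
    (f : GaloisField 2 m × GaloisField 2 m × ZMod 2 × ZMod 2 → ZMod 2)
    (hf : ∀ (x y : GaloisField 2 m) (z₁ z₂ : ZMod 2),
      f (x, y, z₁, z₂) =
        TrSub k m
          (((1 + algebraMap (ZMod 2) (GaloisField 2 m) z₁ +
              algebraMap (ZMod 2) (GaloisField 2 m) z₂) * α +
            algebraMap (ZMod 2) (GaloisField 2 m) z₂ * β +
            algebraMap (ZMod 2) (GaloisField 2 m) z₁ * γ) *
            P (TrRel k m (y * (x⁻¹) ^ e))) + z₁ * z₂) :
    ∀ (a b : GaloisField 2 m) (c₁ c₂ : ZMod 2),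
      (a, b, c₁, c₂) ≠ ((0, 0, 0, 0) :
        GaloisField 2 m × GaloisField 2 m × ZMod 2 × ZMod 2) →
      ∀ c : ZMod 2,
        Nat.card {p : GaloisField 2 m × GaloisField 2 m × ZMod 2 × ZMod 2 //
          f (p.1 + a, p.2.1 + b, p.2.2.1 + c₁, p.2.2.2 + c₂) + f p = c} =
        2 ^ (2 * m + 1) := by
  subst hee
  have hbent : IsBent f := concatenation_of_gPSap_components_is_bent_general hm.ne' hkm
    (Nat.succ_ne_zero _) hgcd (two_pow_add_one_modEq k) hPsub hα hβ hγ hα0 hβ0 hγ0 hsum hf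
  exact fun a b c₁ c₂ hd =>
    hbent.natCard_derivative_fiber (natCard_galoisField_sq_prod_zmod_two_sq hm.ne') hd
end
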